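/- arXiv:2603.21790 — 4 statements merged into one kernel-verified Lean document; each statement's English description precedes it below -/
import Mathlib

section
/- There exists a positive integer k (an absolute constant) such that the following holds. Let P, Q, R ⊆ ℝ³ be finite sets such that for every two distinct points x, y of P ∪ Q ∪ R and every coordinate i ∈ {1,2,3}, xᵢ − yᵢ ∉ {−1, 0, 1}. For each r ∈ R define N²[r] = {p ∈ P : ∃ q ∈ Q with □(q) ∩ □(p) ≠ ∅ and □(q) ∩ □(r) ≠ ∅}. Then the number of distinct sets in {N²[r] : r ∈ R} is at most (|P| + 1)^k. In particular, the VC-dimension of the set system (P, {N²[r] : r ∈ R}) is bounded by an absolute constant independent of P, Q, R. -/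
/-- The closed axis-parallel cube of side length 1 centered at `p ∈ ℝ³`. -/
def cube (p : Fin 3 → ℝ) : Set (Fin 3 → ℝ) :=
  {x | ∀ i, |x i - p i| ≤ 1 / 2}

/-- `N²[r] = {p ∈ P : ∃ q ∈ Q with □(q) ∩ □(p) ≠ ∅ and □(q) ∩ □(r) ≠ ∅}`. -/
def N2cube (P Q : Set (Fin 3 → ℝ)) (r : Fin 3 → ℝ) : Set (Fin 3 → ℝ) :=
  {p ∈ P | ∃ q ∈ Q, (cube q ∩ cube p).Nonempty ∧ (cube q ∩ cube r).Nonempty}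

/-- `A` is shattered by a family `F` of sets. -/
def Shatters {α : Type*} (F : Set (Set α)) (A : Set α) : Prop :=
  ∀ B ⊆ A, ∃ S ∈ F, S ∩ A = B

namespace Cubes

open Finset

/-- Number of points of `P` whose `i`-th (transformed) coordinate is at most `x`. -/
noncomputable def rk {α : Type*} (P : Finset α) (a : α → Fin 3 → ℝ) (i : Fin 3) (x : ℝ) : ℕ := by
  classical exact (P.filter (fun p => a p i ≤ x)).card

lemma rk_mono {α : Type*} (P : Finset α) (a : α → Fin 3 → ℝ) (i : Fin 3) {x y : ℝ} (h : x ≤ y) :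
    rk P a i x ≤ rk P a i y := by
  classical
  unfold rk
  apply Finset.card_le_card
  intro p hp
  simp only [Finset.mem_filter] at hp ⊢
  exact ⟨hp.1, hp.2.trans h⟩

lemma rk_le {α : Type*} (P : Finset α) (a : α → Fin 3 → ℝ) (i : Fin 3) (x : ℝ) :
    rk P a i x ≤ P.card := by
  classical
  exact Finset.card_filter_le _ _

lemma le_of_rk_le {α : Type*} (P : Finset α) (a : α → Fin 3 → ℝ) (i : Fin 3) {p : α} (hp : p ∈ P)
    {x : ℝ} (h : rk P a i (a p i) ≤ rk P a i x) : a p i ≤ x := by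
  classical
  by_contra hlt
  push Not at hlt
  apply absurd h
  push Not
  unfold rk
  apply Finset.card_lt_card
  rw [Finset.ssubset_iff_of_subset]
  · exact ⟨p, by simp [hp], by simp [hlt]⟩
  · intro p' hp'
    simp only [Finset.mem_filter] at hp' ⊢
    exact ⟨hp'.1, hp'.2.trans hlt.le⟩

/-- The points of `P` below some `q ∈ Q` below `r`, where `q` and `r` share exactly the ranks
in `I`. -/
noncomputable def SI {α : Type*} (P : Finset α) (a : α → Fin 3 → ℝ) (Q : Set (Fin 3 → ℝ))
    (I : Finset (Fin 3)) (r : Fin 3 → ℝ) : Finset α := by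
  classical exact P.filter (fun p => ∃ q ∈ Q, a p ≤ q ∧ q ≤ r ∧
    ∀ i, rk P a i (q i) = rk P a i (r i) ↔ i ∈ I)

lemma mem_SI {α : Type*} (P : Finset α) (a : α → Fin 3 → ℝ) (Q : Set (Fin 3 → ℝ))
    (I : Finset (Fin 3)) (r : Fin 3 → ℝ) (p : α) : p ∈ SI P a Q I r ↔ p ∈ P ∧ ∃ q ∈ Q, a p ≤ q ∧
      q ≤ r ∧ ∀ i, rk P a i (q i) = rk P a i (r i) ↔ i ∈ I := by
  classical
  unfold SI
  simp

lemma SI_mono {α : Type*} (P : Finset α) (a : α → Fin 3 → ℝ) (Q : Set (Fin 3 → ℝ))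
    (I : Finset (Fin 3)) (r r' : Fin 3 → ℝ) (h : ∀ i, rk P a i (r i) = rk P a i (r' i))
    (hI : ∀ i ∈ I, r i ≤ r' i) : SI P a Q I r ⊆ SI P a Q I r' := by
  intro p hp
  rw [mem_SI] at hp ⊢
  obtain ⟨hP, q, hq, hpq, hqr, hqI⟩ := hp
  refine ⟨hP, q, hq, hpq, ?_, fun i => by rw [← h i]; exact hqI i⟩
  intro i
  by_cases hi : i ∈ I
  · exact (hqr i).trans (hI i hi)
  · by_contra hlt
    push Not at hlt
    apply hi
    rw [← hqI i]
    exact le_antisymm (rk_mono P a i (hqr i)) (by rw [h i]; exact rk_mono P a i hlt.le)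

lemma SI_swap {α : Type*} (P : Finset α) (a : α → Fin 3 → ℝ) (Q : Set (Fin 3 → ℝ))
    (I : Finset (Fin 3)) (k : Fin 3) (hk : ∀ i, i ≠ k → i ∈ I) (r r' : Fin 3 → ℝ)
    (h : ∀ i, rk P a i (r i) = rk P a i (r' i)) (p : α) (hP : p ∈ P) (q q' : Fin 3 → ℝ)
    (hq' : q' ∈ Q) (hpq : a p ≤ q) (hq'r' : q' ≤ r')
    (hqI : ∀ i, rk P a i (q i) = rk P a i (r i) ↔ i ∈ I)
    (hqI' : ∀ i, rk P a i (q' i) = rk P a i (r' i) ↔ i ∈ I)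
    (hle : rk P a k (q k) ≤ rk P a k (q' k)) : p ∈ SI P a Q I r' := by
  rw [mem_SI]
  refine ⟨hP, q', hq', ?_, hq'r', hqI'⟩
  intro i
  apply le_of_rk_le P a i hP
  refine (rk_mono P a i (hpq i)).trans ?_
  by_cases hi : i = k
  · subst hi; exact hle
  · rw [(hqI i).2 (hk i hi), (hqI' i).2 (hk i hi), h i]

lemma SI_chain {α : Type*} (P : Finset α) (a : α → Fin 3 → ℝ) (Q : Set (Fin 3 → ℝ))
    (I : Finset (Fin 3)) (r r' : Fin 3 → ℝ) (h : ∀ i, rk P a i (r i) = rk P a i (r' i)) :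
    SI P a Q I r ⊆ SI P a Q I r' ∨ SI P a Q I r' ⊆ SI P a Q I r := by
  have hcase : (∃ i, ∀ j ∈ I, j = i) ∨ (∃ k, ∀ i, i ≠ k → i ∈ I) := by
    revert I; decide
  rcases hcase with ⟨i, hi⟩ | ⟨k, hk⟩
  · rcases le_total (r i) (r' i) with hr | hr
    · left
      exact SI_mono P a Q I r r' h (fun j hj => by rw [hi j hj]; exact hr)
    · right
      exact SI_mono P a Q I r' r (fun i => (h i).symm) (fun j hj => by rw [hi j hj]; exact hr)
  · by_contra hcon
    push Not at hcon
    obtain ⟨h1, h2⟩ := hcon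
    rw [Finset.not_subset] at h1 h2
    obtain ⟨p, hp, hpn⟩ := h1
    obtain ⟨p', hp', hpn'⟩ := h2
    rw [mem_SI] at hp hp'
    obtain ⟨hP, q, hq, hpq, hqr, hqI⟩ := hp
    obtain ⟨hP', q', hq', hpq', hqr', hqI'⟩ := hp'
    rcases le_total (rk P a k (q k)) (rk P a k (q' k)) with hle | hle
    · exact hpn (SI_swap P a Q I k hk r r' h p hP q q' hq' hpq hqr' hqI hqI' hle)
    · exact hpn' (SI_swap P a Q I k hk r' r (fun i => (h i).symm) p' hP' q' q hq hpq' hqr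
        hqI' hqI hle)

/-- The code of `r`: all ranks, and all cardinalities of the sets `SI`. -/
noncomputable def code {α : Type*} (P : Finset α) (a : α → Fin 3 → ℝ) (Q : Set (Fin 3 → ℝ))
    (r : Fin 3 → ℝ) : Fin 3 ⊕ Finset (Fin 3) → Fin (P.card + 1)
  | Sum.inl i => ⟨rk P a i (r i), Nat.lt_succ_of_le (rk_le P a i (r i))⟩
  | Sum.inr I => ⟨(SI P a Q I r).card, Nat.lt_succ_of_le (Finset.card_le_card
      (fun p hp => ((mem_SI P a Q I r p).1 hp).1))⟩

lemma code_spec {α : Type*} (P : Finset α) (a : α → Fin 3 → ℝ) (Q : Set (Fin 3 → ℝ))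
    (r r' : Fin 3 → ℝ) (h : code P a Q r = code P a Q r') (p : α) (hp : p ∈ P)
    (hr : ∃ q ∈ Q, a p ≤ q ∧ q ≤ r) : ∃ q ∈ Q, a p ≤ q ∧ q ≤ r' := by
  classical
  have h1 : ∀ i, rk P a i (r i) = rk P a i (r' i) := fun i => by
    simpa [code] using congrFun h (Sum.inl i)
  have h2 : ∀ I, (SI P a Q I r).card = (SI P a Q I r').card := fun I => by
    simpa [code] using congrFun h (Sum.inr I)
  obtain ⟨q, hq, hpq, hqr⟩ := hr
  let I : Finset (Fin 3) := Finset.univ.filter (fun i => rk P a i (q i) = rk P a i (r i))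
  have hmem : p ∈ SI P a Q I r := by
    rw [mem_SI]
    exact ⟨hp, q, hq, hpq, hqr, fun i => by simp [I]⟩
  have heq : SI P a Q I r = SI P a Q I r' := by
    rcases SI_chain P a Q I r r' h1 with hs | hs
    · exact Finset.eq_of_subset_of_card_le hs (h2 I).ge
    · exact (Finset.eq_of_subset_of_card_le hs (h2 I).le).symm
  rw [heq, mem_SI] at hmem
  obtain ⟨_, q', hq', hpq', hqr', _⟩ := hmem
  exact ⟨q', hq', hpq', hqr'⟩

lemma cube_inter (p q : Fin 3 → ℝ) : (cube q ∩ cube p).Nonempty ↔ ∀ i, |q i - p i| ≤ 1 := by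
  constructor
  · rintro ⟨x, hq, hp⟩ i
    have h1 := abs_le.1 (hq i)
    have h2 := abs_le.1 (hp i)
    rw [abs_le]
    constructor <;> linarith [h1.1, h1.2, h2.1, h2.2]
  · intro h
    refine ⟨fun i => (q i + p i) / 2, fun i => ?_, fun i => ?_⟩ <;>
    · have h1 := abs_le.1 (h i)
      rw [abs_le]
      constructor <;> dsimp only <;> linarith [h1.1, h1.2]

/-- The sign attached to a Boolean. -/
def sg (b : Bool) : ℝ := if b then 1 else -1

lemma N2_iff (P Q : Set (Fin 3 → ℝ)) (r p : Fin 3 → ℝ) : p ∈ N2cube P Q r ↔ p ∈ P ∧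
    ∃ s : Fin 3 → Bool,
      (∃ q ∈ (Set.univ : Set (Fin 3 → ℝ)),
        (fun i => -(sg (s i) * p i)) ≤ q ∧ q ≤ (fun i => -(sg (s i) * r i))) ∧
      (∃ q ∈ (fun (q : Fin 3 → ℝ) i => sg (s i) * q i) '' Q,
        (fun i => sg (s i) * p i - 1) ≤ q ∧ q ≤ (fun i => sg (s i) * r i + 1)) := by
  unfold N2cube
  simp only [Set.mem_ofPred_eq, cube_inter]
  refine and_congr_right fun _ => ?_
  constructor
  · rintro ⟨q, hq, hp, hr⟩
    refine ⟨fun i => decide (r i ≤ p i), ⟨_, Set.mem_univ _, ?_, le_refl _⟩,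
      ⟨_, ⟨q, hq, rfl⟩, ?_, ?_⟩⟩
    all_goals
      intro i
      have h1 := abs_le.1 (hp i)
      have h2 := abs_le.1 (hr i)
      by_cases hc : r i ≤ p i
      · simp only [sg, hc, decide_true, if_true]; linarith [h1.1, h1.2, h2.1, h2.2]
      · simp only [sg, hc, decide_false]; push Not at hc
        simp only [Bool.false_eq_true, if_false]
        linarith [h1.1, h1.2, h2.1, h2.2]
  · rintro ⟨s, ⟨x, _, hx1, hx2⟩, ⟨_, ⟨q, hq, rfl⟩, h1, h2⟩⟩
    refine ⟨q, hq, fun i => ?_, fun i => ?_⟩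
    all_goals
      have h3 := (hx1 i).trans (hx2 i)
      have h4 := h1 i
      have h5 := h2 i
      rw [abs_le]
      dsimp only at h3 h4 h5
      cases hs : s i <;> simp only [sg, hs, Bool.false_eq_true, if_false, if_true] at h3 h4 h5 <;>
      constructor <;> linarith

/-- The index type of the combined code. -/
abbrev Idx := (Fin 3 → Bool) × Bool × (Fin 3 ⊕ Finset (Fin 3))

/-- The combined code of `r`. -/
noncomputable def bigCode (P : Finset (Fin 3 → ℝ)) (Q : Set (Fin 3 → ℝ)) (r : Fin 3 → ℝ) :
    Idx → Fin (P.card + 1)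
  | (s, true, j) => code P (fun p i => -(sg (s i) * p i)) Set.univ (fun i => -(sg (s i) * r i)) j
  | (s, false, j) => code P (fun p i => sg (s i) * p i - 1)
      ((fun (q : Fin 3 → ℝ) i => sg (s i) * q i) '' Q) (fun i => sg (s i) * r i + 1) j

lemma bigCode_subset (P : Finset (Fin 3 → ℝ)) (Q : Set (Fin 3 → ℝ)) (r r' : Fin 3 → ℝ)
    (h : bigCode P Q r = bigCode P Q r') : N2cube (P : Set _) Q r ⊆ N2cube (P : Set _) Q r' := by
  intro p hp
  rw [N2_iff] at hp ⊢
  obtain ⟨hP, s, h1, h2⟩ := hp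
  refine ⟨hP, s, ?_, ?_⟩
  · refine code_spec P (fun p i => -(sg (s i) * p i)) Set.univ _ _ ?_ p hP h1
    funext j
    exact congrFun h (s, true, j)
  · refine code_spec P (fun p i => sg (s i) * p i - 1)
      ((fun (q : Fin 3 → ℝ) i => sg (s i) * q i) '' Q) _ _ ?_ p hP h2
    funext j
    exact congrFun h (s, false, j)

lemma count (P Q R : Set (Fin 3 → ℝ)) (hP : P.Finite) :
    ((fun r => N2cube P Q r) '' R).ncard ≤ (P.ncard + 1) ^ Fintype.card Idx := by
  classical
  lift P to Finset (Fin 3 → ℝ) using hP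
  rw [Set.ncard_coe_finset]
  have hrep : ∀ S ∈ (fun r => N2cube (P : Set _) Q r) '' R, ∃ r, N2cube (P : Set _) Q r = S := by
    rintro S ⟨r, _, rfl⟩
    exact ⟨r, rfl⟩
  choose! f hf using hrep
  have h := Set.ncard_le_ncard_of_injOn (s := (fun r => N2cube (P : Set _) Q r) '' R)
    (t := (Set.univ : Set (Idx → Fin (P.card + 1)))) (fun S => bigCode P Q (f S))
    (fun _ _ => Set.mem_univ _) ?_ Set.finite_univ
  · rw [Set.ncard_univ, Nat.card_eq_fintype_card, Fintype.card_fun, Fintype.card_fin] at h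
    exact h
  · intro S hS T hT hST
    rw [← hf S hS, ← hf T hT]
    exact Set.Subset.antisymm (bigCode_subset P Q _ _ hST) (bigCode_subset P Q _ _ hST.symm)

lemma exists_bound (k : ℕ) : ∃ c : ℕ, ∀ m : ℕ, 2 ^ m ≤ (m + 1) ^ k → m ≤ c := by
  have ht := tendsto_pow_const_div_const_pow_of_one_lt k (r := (2 : ℝ)) (by norm_num)
  have he := ht.eventually (gt_mem_nhds (show (0 : ℝ) < 1 / 2 by norm_num))
  obtain ⟨c, hc⟩ := Filter.eventually_atTop.1 he
  refine ⟨c, fun m hm => ?_⟩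
  by_contra hlt
  push Not at hlt
  have h1 := hc (m + 1) (by omega)
  rw [div_lt_iff₀ (by positivity)] at h1
  have h2 : (2 : ℝ) ^ m ≤ ((m : ℝ) + 1) ^ k := by exact_mod_cast hm
  push_cast at h1
  rw [pow_succ] at h1
  linarith

end Cubes

theorem stmt12 :
    ∃ k c : ℕ, 0 < k ∧
      ∀ P Q R : Set (Fin 3 → ℝ), P.Finite → Q.Finite → R.Finite →
        (∀ x ∈ P ∪ Q ∪ R, ∀ y ∈ P ∪ Q ∪ R, x ≠ y →
          ∀ i, x i - y i ∉ ({-1, 0, 1} : Set ℝ)) →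
        ((fun r => N2cube P Q r) '' R).ncard ≤ (P.ncard + 1) ^ k ∧
        ∀ A ⊆ P, Shatters ((fun r => N2cube P Q r) '' R) A → A.ncard ≤ c := by
  obtain ⟨c, hc⟩ := Cubes.exists_bound (Fintype.card Cubes.Idx)
  refine ⟨Fintype.card Cubes.Idx, c, Fintype.card_pos, ?_⟩
  intro P Q R hP _ hR _
  refine ⟨Cubes.count P Q R hP, fun A hA hsh => hc _ ?_⟩
  refine le_trans ?_ (Cubes.count A Q R (hP.subset hA))
  rw [← Set.ncard_powerset A (hP.subset hA)]
  apply Set.ncard_le_ncard _ (hR.image _)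
  intro B hB
  obtain ⟨_, ⟨r, hr, rfl⟩, hS⟩ := hsh B hB
  refine ⟨r, hr, ?_⟩
  rw [← hS]
  ext p
  simp only [N2cube, Set.mem_ofPred_eq, Set.mem_inter_iff]
  constructor
  · rintro ⟨h1, h2⟩
    exact ⟨⟨hA h1, h2⟩, h1⟩
  · rintro ⟨⟨_, h2⟩, h1⟩
    exact ⟨h1, h2⟩
end

section
/- Let P, Q, R, S ⊆ ℝ³ be finite sets such that all points of P ∪ Q ∪ R ∪ S have pairwise distinct coordinate values in each of the three axes, and let ◁₁, ◁₂, ◁₃ be generalized dominance relations. If P and S are x-separated, y-separated, and z-separated, then the number of distinct sets in the family {N³[s] : s ∈ S} is at most (|P| + 1)²¹. -/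
/-- The three possible coordinate relations: `<`, `>`, or the always-true relation. -/
inductive CoordRel
  | lt
  | gt
  | top

/-- Interpretation of a coordinate relation on real numbers. -/
def CoordRel.holds : CoordRel → ℝ → ℝ → Prop
  | .lt, a, b => a < b
  | .gt, a, b => b < a
  | .top, _, _ => True

/-- A generalized dominance relation on `ℝ³`: `p ◁ q` iff in each of the three
coordinates a fixed relation (`<`, `>`, or always-true) holds. -/
def IsGenDom (rel : (Fin 3 → ℝ) → (Fin 3 → ℝ) → Prop) : Prop :=
  ∃ R : Fin 3 → CoordRel, ∀ p q, rel p q ↔ ∀ i, (R i).holds (p i) (q i)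

/-- `A` and `B` are separated in coordinate `i`: some threshold `μ` has all of `A`
strictly below and all of `B` strictly above in coordinate `i`, or vice versa. -/
def SepAt (i : Fin 3) (A B : Set (Fin 3 → ℝ)) : Prop :=
  ∃ μ : ℝ, ((∀ a ∈ A, a i < μ) ∧ ∀ b ∈ B, μ < b i) ∨
    ((∀ b ∈ B, b i < μ) ∧ ∀ a ∈ A, μ < a i)

/-- `N³[s] = {p ∈ P : ∃ q ∈ Q, r ∈ R with p ◁₁ q, q ◁₂ r and r ◁₃ s}`. -/
def N3 (P Q R : Set (Fin 3 → ℝ)) (d₁ d₂ d₃ : (Fin 3 → ℝ) → (Fin 3 → ℝ) → Prop)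
    (s : Fin 3 → ℝ) : Set (Fin 3 → ℝ) :=
  {p ∈ P | ∃ q ∈ Q, ∃ r ∈ R, d₁ p q ∧ d₂ q r ∧ d₃ r s}

open Classical in
/-- A family of subsets of `P` with no shattered triple has at most `(n+1)^2` members. -/
lemma aux_vc2 {V : Type*} (P S : Set V) (hP : P.Finite) (hS : S.Finite) (F : V → Set V)
    (hF : ∀ s, F s ⊆ P)
    (h : ∀ a b c : V, a ≠ b → a ≠ c → b ≠ c →
      (∀ B ⊆ ({a, b, c} : Set V), ∃ s ∈ S, ∀ x ∈ ({a, b, c} : Set V), x ∈ F s ↔ x ∈ B) → False) :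
    (F '' S).ncard ≤ (P.ncard + 1) ^ 2 := by
  set Pf := hP.toFinset with hPf
  set 𝒜 : Finset (Finset V) := hS.toFinset.image (fun s => Pf.filter (fun p => p ∈ F s)) with h𝒜
  have h1 : (F '' S).ncard ≤ 𝒜.card := by
    have : F '' S = (fun t : Finset V => (t : Set V)) '' (𝒜 : Set (Finset V)) := by
      ext t
      simp only [h𝒜, Set.mem_image, Finset.coe_image, Set.Finite.coe_toFinset, exists_exists_and_eq_and]
      have : ∀ s, ((Pf.filter (fun p => p ∈ F s) : Finset V) : Set V) = F s := by
        intro s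
        ext x
        simp only [hPf, Finset.coe_filter, Set.Finite.mem_toFinset, Set.mem_ofPred_eq]
        exact ⟨fun h => h.2, fun h => ⟨hF s h, h⟩⟩
      simp only [this]
    rw [this]
    exact (Set.ncard_image_le (Finset.finite_toSet _)).trans (by rw [Set.ncard_coe_finset])
  have h2 : 𝒜.card ≤ 𝒜.shatterer.card := Finset.card_le_card_shatterer 𝒜
  have h3 : 𝒜.shatterer ⊆ Pf.powersetCard 0 ∪ Pf.powersetCard 1 ∪ Pf.powersetCard 2 := by
    intro t ht
    rw [Finset.mem_shatterer] at ht
    have htP : t ⊆ Pf := by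
      obtain ⟨u, hu, hut⟩ := ht (Finset.Subset.refl t)
      simp only [h𝒜, Finset.mem_image] at hu
      obtain ⟨s, -, rfl⟩ := hu
      intro x hx
      rw [← hut] at hx
      exact (Finset.mem_filter.1 (Finset.mem_inter.1 hx).2).1
    have hc : t.card ≤ 2 := by
      by_contra hcon
      obtain ⟨a, b, c, ha, hb, hc, hab, hac, hbc⟩ := Finset.two_lt_card_iff.1 (not_le.1 hcon)
      refine h a b c hab hac hbc ?_
      intro B hB
      obtain ⟨u, hu, hut⟩ := ht (Finset.filter_subset (fun x => x ∈ B) t)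
      simp only [h𝒜, Finset.mem_image] at hu
      obtain ⟨s, hs, rfl⟩ := hu
      refine ⟨s, by simpa using hs, ?_⟩
      intro x hx
      have hxt : x ∈ t := by
        rcases hx with rfl | rfl | rfl <;> assumption
      have := congrArg (fun z => x ∈ z) hut
      simp only [Finset.mem_inter, Finset.mem_filter, hxt, htP hxt, true_and, eq_iff_iff] at this
      exact this
    simp only [Finset.mem_union, Finset.mem_powersetCard, htP, true_and]
    omega
  have h4 := Finset.card_le_card h3
  have h5 : (Pf.powersetCard 0 ∪ Pf.powersetCard 1 ∪ Pf.powersetCard 2).card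
      ≤ 1 + Pf.card + Pf.card.choose 2 := by
    refine (Finset.card_union_le _ _).trans ?_
    have := Finset.card_union_le (Pf.powersetCard 0) (Pf.powersetCard 1)
    simp only [Finset.card_powersetCard, Nat.choose_zero_right, Nat.choose_one_right] at this ⊢
    omega
  have h6 : P.ncard = Pf.card := Set.ncard_eq_toFinset_card P hP
  have h7 : Pf.card.choose 2 ≤ Pf.card ^ 2 := Nat.choose_le_pow _ _
  rw [h6]
  nlinarith

/-- A chain of subsets of `P` has at most `n+1` members. -/
lemma aux_chain {V : Type*} (P S : Set V) (hP : P.Finite) (F : V → Set V)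
    (hF : ∀ s, F s ⊆ P)
    (h : ∀ p p' s s', p ∈ F s → p' ∈ F s' → p ∈ F s' ∨ p' ∈ F s) :
    (F '' S).ncard ≤ (P.ncard + 1) ^ 1 := by
  have hch : ∀ s s', F s ⊆ F s' ∨ F s' ⊆ F s := by
    intro s s'
    by_contra hcon
    push Not at hcon
    obtain ⟨h1, h2⟩ := hcon
    obtain ⟨p, hp, hp'⟩ := Set.not_subset.1 h1
    obtain ⟨q, hq, hq'⟩ := Set.not_subset.1 h2
    rcases h p q s s' hp hq with h | h
    · exact hp' h
    · exact hq' h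
  have key : (F '' S).ncard ≤ ((Finset.range (P.ncard + 1) : Finset ℕ) : Set ℕ).ncard := by
    apply Set.ncard_le_ncard_of_injOn (fun t => t.ncard)
    · rintro _ ⟨s, -, rfl⟩
      simp only [Finset.coe_range, Set.mem_Iio]
      exact Nat.lt_succ_of_le (Set.ncard_le_ncard (hF s) hP)
    · rintro _ ⟨s, -, rfl⟩ _ ⟨s', -, rfl⟩ he
      rcases hch s s' with h | h
      · exact Set.eq_of_subset_of_ncard_le h (le_of_eq he.symm) (hP.subset (hF s'))
      · exact (Set.eq_of_subset_of_ncard_le h (le_of_eq he) (hP.subset (hF s))).symm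
  rw [Set.ncard_coe_finset, Finset.card_range] at key
  simpa using key

lemma aux_union {V : Type*} (S : Set V) (hS : S.Finite) (F G : V → Set V) (n a b : ℕ)
    (hF : (F '' S).ncard ≤ n ^ a) (hG : (G '' S).ncard ≤ n ^ b) :
    ((fun s => F s ∪ G s) '' S).ncard ≤ n ^ (a + b) := by
  have hsub : (fun s => F s ∪ G s) '' S ⊆
      (fun z : Set V × Set V => z.1 ∪ z.2) '' ((F '' S) ×ˢ (G '' S)) := by
    rintro _ ⟨s, hs, rfl⟩
    exact ⟨(F s, G s), ⟨⟨s, hs, rfl⟩, ⟨s, hs, rfl⟩⟩, rfl⟩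
  have hfin : ((F '' S) ×ˢ (G '' S)).Finite := (hS.image F).prod (hS.image G)
  calc _ ≤ _ := Set.ncard_le_ncard hsub (hfin.image _)
    _ ≤ _ := Set.ncard_image_le hfin
    _ = (F '' S).ncard * (G '' S).ncard := Set.ncard_prod
    _ ≤ n ^ a * n ^ b := Nat.mul_le_mul hF hG
    _ = _ := (pow_add n a b).symm

/-- Interchange property. -/
lemma CoordRel.ferrers (R : CoordRel) (a a' b b' : ℝ) (h : R.holds a b) (h' : R.holds a' b') :
    R.holds a b' ∨ R.holds a' b := by
  cases R <;> simp only [CoordRel.holds] at *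
  · by_contra hc; push Not at hc; linarith
  · by_contra hc; push Not at hc; linarith
  · simp

def DirF {V : Type*} (A B : V → V → Prop) : Prop :=
  ∀ p q q' r, A p q' → ¬ A p q → B q' r → B q r
def DirB {V : Type*} (A B : V → V → Prop) : Prop :=
  ∀ p q q' r, A p q' → ¬ A p q → B q r → B q' r

lemma CoordRel.dir {V : Type*} (f : V → ℝ) (R R' : CoordRel) :
    DirF (fun p q => R.holds (f p) (f q)) (fun p q => R'.holds (f p) (f q)) ∨
    DirB (fun p q => R.holds (f p) (f q)) (fun p q => R'.holds (f p) (f q)) := by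
  unfold DirF DirB
  cases R <;> cases R' <;> simp only [CoordRel.holds, not_lt, not_true, imp_self, implies_true,
    or_true, IsEmpty.forall_iff]
  · left; intros; linarith
  · right; intros; linarith
  · right; intros; linarith
  · left; intros; linarith

lemma aux_hard {V : Type*} (P S Qh Rh : Set V) (hP : P.Finite) (hS : S.Finite)
    (α β γ δ ε ζ : V → V → Prop)
    (hα : ∀ a a' b b', α a b → α a' b' → α a b' ∨ α a' b)
    (hβ : ∀ a a' b b', β a b → β a' b' → β a b' ∨ β a' b)
    (hε : ∀ a a' b b', ε a b → ε a' b' → ε a b' ∨ ε a' b)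
    (hαγ : DirF α γ ∨ DirB α γ) (hδζ : DirF δ ζ ∨ DirB δ ζ) :
    ((fun s => {p ∈ P | ∃ q ∈ Qh, ∃ r ∈ Rh, α p q ∧ β p q ∧ γ q r ∧ δ q r ∧ ε r s ∧ ζ r s}) '' S).ncard
      ≤ (P.ncard + 1) ^ 2 := by
  set F : V → Set V := fun s =>
    {p ∈ P | ∃ q ∈ Qh, ∃ r ∈ Rh, α p q ∧ β p q ∧ γ q r ∧ δ q r ∧ ε r s ∧ ζ r s} with hFdef
  have key : (∀ p p' s s', (∀ q, α p' q → α p q) → (∀ q, β p q → β p' q) →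
        p ∈ F s → p' ∈ F s' → p' ∉ F s → p ∉ F s' → ∃ r, ε r s ∧ ¬ ε r s') ∨
      (∀ p p' s s', (∀ q, α p' q → α p q) → (∀ q, β p q → β p' q) →
        p ∈ F s → p' ∈ F s' → p' ∉ F s → p ∉ F s' → ∃ r, ε r s' ∧ ¬ ε r s) := by
    have expand : ∀ p p' s s', (∀ q, α p' q → α p q) → (∀ q, β p q → β p' q) →
        p ∈ F s → p' ∈ F s' → p' ∉ F s → p ∉ F s' →
        ∃ q r q' r', α p q ∧ γ q r ∧ δ q r ∧ ε r s ∧ ζ r s ∧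
          α p' q' ∧ γ q' r' ∧ δ q' r' ∧ ε r' s' ∧ ζ r' s' ∧ ¬ α p' q ∧
          (γ q r' → ¬ δ q r') ∧ (γ q' r → ¬ δ q' r) ∧
          (ζ r' s → ¬ ε r' s) ∧ (ζ r s' → ¬ ε r s') := by
      rintro p p' s s' wα wβ ⟨hp, q, hq, r, hr, a, b, c, d, e, z⟩
        ⟨hp', q', hq', r', hr', a', b', c', d', e', z'⟩ n1 n2
      refine ⟨q, r, q', r', a, c, d, e, z, a', c', d', e', z', ?_, ?_, ?_, ?_, ?_⟩
      · exact fun x => n1 ⟨hp', q, hq, r, hr, x, wβ _ b, c, d, e, z⟩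
      · exact fun x y => n2 ⟨hp, q, hq, r', hr', a, b, x, y, e', z'⟩
      · exact fun x y => n1 ⟨hp', q', hq', r, hr, a', b', x, y, e, z⟩
      · exact fun x y => n1 ⟨hp', q', hq', r', hr', a', b', c', d', y, x⟩
      · exact fun x y => n2 ⟨hp, q, hq, r, hr, a, b, c, d, y, x⟩
    rcases hαγ with h1 | h1 <;> rcases hδζ with h2 | h2
    · right
      intro p p' s s' w1 w2 m1 m2 m3 m4
      obtain ⟨q, r, q', r', a, c, d, e, z, a', c', d', e', z', f1, f2, f3, f4, f5⟩ :=
        expand p p' s s' w1 w2 m1 m2 m3 m4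
      exact ⟨r', e', f4 (h2 q r' r s d (f2 (h1 p' q q' r' a' f1 c')) z)⟩
    · left
      intro p p' s s' w1 w2 m1 m2 m3 m4
      obtain ⟨q, r, q', r', a, c, d, e, z, a', c', d', e', z', f1, f2, f3, f4, f5⟩ :=
        expand p p' s s' w1 w2 m1 m2 m3 m4
      exact ⟨r, e, f5 (h2 q r' r s' d (f2 (h1 p' q q' r' a' f1 c')) z')⟩
    · left
      intro p p' s s' w1 w2 m1 m2 m3 m4
      obtain ⟨q, r, q', r', a, c, d, e, z, a', c', d', e', z', f1, f2, f3, f4, f5⟩ :=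
        expand p p' s s' w1 w2 m1 m2 m3 m4
      exact ⟨r, e, f5 (h2 q' r r' s' d' (f3 (h1 p' q q' r a' f1 c)) z')⟩
    · right
      intro p p' s s' w1 w2 m1 m2 m3 m4
      obtain ⟨q, r, q', r', a, c, d, e, z, a', c', d', e', z', f1, f2, f3, f4, f5⟩ :=
        expand p p' s s' w1 w2 m1 m2 m3 m4
      exact ⟨r', e', f4 (h2 q' r r' s d' (f3 (h1 p' q q' r a' f1 c)) z)⟩
  have tα : ∀ p p', (∀ q, α p' q → α p q) ∨ (∀ q, α p q → α p' q) := by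
    intro p p'
    by_contra hc
    push Not at hc
    obtain ⟨⟨q, x, y⟩, ⟨q', x', y'⟩⟩ := hc
    rcases hα _ _ _ _ x x' with h | h
    · exact y' h
    · exact y h
  have tβ : ∀ p p', (∀ q, β p' q → β p q) ∨ (∀ q, β p q → β p' q) := by
    intro p p'
    by_contra hc
    push Not at hc
    obtain ⟨⟨q, x, y⟩, ⟨q', x', y'⟩⟩ := hc
    rcases hβ _ _ _ _ x x' with h | h
    · exact y' h
    · exact y h
  have sorted : ∀ a b c : V, a ≠ b → a ≠ c → b ≠ c →
      (∀ q, α b q → α a q) → (∀ q, α c q → α b q) →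
      (∀ B ⊆ ({a, b, c} : Set V), ∃ s ∈ S, ∀ x ∈ ({a, b, c} : Set V), x ∈ F s ↔ x ∈ B) → False := by
    intro a b c hab hac hbc w1 w2 hsh
    obtain ⟨s, -, hs⟩ := hsh {b} (by simp)
    obtain ⟨s', -, hs'⟩ := hsh {a, c} (by intro x; simp; tauto)
    obtain ⟨u, -, hu⟩ := hsh {c} (by simp)
    have sa : a ∉ F s := by rw [hs a (by simp)]; simpa using hab
    have sb : b ∈ F s := by rw [hs b (by simp)]; simp
    have sc : c ∉ F s := by rw [hs c (by simp)]; simpa using hbc.symm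
    have sa' : a ∈ F s' := by rw [hs' a (by simp)]; simp
    have sb' : b ∉ F s' := by rw [hs' b (by simp)]; simp [hab.symm, hbc]
    have sc' : c ∈ F s' := by rw [hs' c (by simp)]; simp
    have ub : b ∉ F u := by rw [hu b (by simp)]; simpa using hbc
    have uc : c ∈ F u := by rw [hu c (by simp)]; simp
    have mono : ∀ p p' s, p ∈ P → (∀ q, α p' q → α p q) → (∀ q, β p' q → β p q) →
        p' ∈ F s → p ∈ F s := by
      rintro p p' s hp x y ⟨-, q, hq, r, hr, m1, m2, m3⟩
      exact ⟨hp, q, hq, r, hr, x _ m1, y _ m2, m3⟩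
    have v1 : ∀ q, β a q → β b q := by
      rcases tβ a b with h | h
      · exact absurd (mono a b s sa'.1 w1 h sb) sa
      · exact h
    have v2 : ∀ q, β b q → β c q := by
      rcases tβ b c with h | h
      · exact absurd (mono b c u sb.1 w2 h uc) ub
      · exact h
    rcases key with k | k
    · obtain ⟨r, e1, e2⟩ := k a b s' s w1 v1 sa' sb sb' sa
      obtain ⟨r', e1', e2'⟩ := k b c s s' w2 v2 sb sc' sc sb'
      rcases hε _ _ _ _ e1 e1' with h | h
      · exact e2 h
      · exact e2' h
    · obtain ⟨r, e1, e2⟩ := k a b s' s w1 v1 sa' sb sb' sa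
      obtain ⟨r', e1', e2'⟩ := k b c s s' w2 v2 sb sc' sc sb'
      rcases hε _ _ _ _ e1 e1' with h | h
      · exact e2 h
      · exact e2' h
  refine aux_vc2 P S hP hS F (fun s => Set.sep_subset _ _) ?_
  intro a b c hab hac hbc hsh
  have perm : ∀ a' b' c' : V, ({a', b', c'} : Set V) = {a, b, c} →
      (∀ B ⊆ ({a', b', c'} : Set V), ∃ s ∈ S, ∀ x ∈ ({a', b', c'} : Set V), x ∈ F s ↔ x ∈ B) := by
    intro a' b' c' h
    rw [h]
    exact hsh
  rcases tα a b with h1 | h1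
  · rcases tα b c with h2 | h2
    · exact sorted a b c hab hac hbc h1 h2 hsh
    · rcases tα a c with h3 | h3
      · exact sorted a c b hac hab hbc.symm h3 h2 (perm _ _ _ (by ext; simp; tauto))
      · exact sorted c a b hac.symm hbc.symm hab h3 h1 (perm _ _ _ (by ext; simp; tauto))
  · rcases tα a c with h3 | h3
    · exact sorted b a c hab.symm hbc hac h1 h3 (perm _ _ _ (by ext; simp; tauto))
    · rcases tα b c with h2 | h2
      · exact sorted b c a hbc hab.symm hac.symm h2 h3 (perm _ _ _ (by ext; simp; tauto))
      · exact sorted c b a hbc.symm hac.symm hab.symm h2 h1 (perm _ _ _ (by ext; simp; tauto))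

/-- Separation in coordinate `i` gives a side predicate across which all coordinate relations
are constant. -/
lemma aux_side (i : Fin 3) (P S : Set (Fin 3 → ℝ)) (h : SepAt i P S) :
    ∃ N : ℝ → Prop, (∀ p ∈ P, N (p i)) ∧ (∀ s ∈ S, ¬ N (s i)) ∧
      (∀ R : CoordRel, ∃ c : Prop, ∀ a b, N a → ¬ N b → (R.holds a b ↔ c)) ∧
      (∀ R : CoordRel, ∃ c : Prop, ∀ a b, ¬ N a → N b → (R.holds a b ↔ c)) := by
  obtain ⟨μ, ⟨hp, hs⟩ | ⟨hs, hp⟩⟩ := h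
  · refine ⟨fun x => x < μ, hp, fun s h => not_lt.2 (hs s h).le, ?_, ?_⟩
    · intro R
      refine ⟨R.holds 0 1, fun a b ha hb => ?_⟩
      cases R <;> simp only [CoordRel.holds, not_lt] at * <;> constructor <;> intros <;> linarith
    · intro R
      refine ⟨R.holds 1 0, fun a b ha hb => ?_⟩
      cases R <;> simp only [CoordRel.holds, not_lt] at * <;> constructor <;> intros <;> linarith
  · refine ⟨fun x => μ < x, hp, fun s h => not_lt.2 (hs s h).le, ?_, ?_⟩
    · intro R
      refine ⟨R.holds 1 0, fun a b ha hb => ?_⟩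
      cases R <;> simp only [CoordRel.holds, not_lt] at * <;> constructor <;> intros <;> linarith
    · intro R
      refine ⟨R.holds 0 1, fun a b ha hb => ?_⟩
      cases R <;> simp only [CoordRel.holds, not_lt] at * <;> constructor <;> intros <;> linarith

lemma aux_perm (i j k : Fin 3) (hij : i ≠ j) (hik : i ≠ k) (hjk : j ≠ k) (f : Fin 3 → Prop) :
    (∀ l, f l) ↔ f i ∧ f j ∧ f k := by
  constructor
  · exact fun h => ⟨h i, h j, h k⟩
  · rintro ⟨a, b, c⟩ l
    have : l = i ∨ l = j ∨ l = k := by omega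
    rcases this with rfl | rfl | rfl <;> assumption

theorem stmt15 (P Q R S : Set (Fin 3 → ℝ))
    (hP : P.Finite) (hQ : Q.Finite) (hR : R.Finite) (hS : S.Finite)
    (hdistinct : ∀ x ∈ P ∪ Q ∪ R ∪ S, ∀ y ∈ P ∪ Q ∪ R ∪ S, x ≠ y → ∀ i, x i ≠ y i)
    (d₁ d₂ d₃ : (Fin 3 → ℝ) → (Fin 3 → ℝ) → Prop)
    (h₁ : IsGenDom d₁) (h₂ : IsGenDom d₂) (h₃ : IsGenDom d₃)
    (hx : SepAt 0 P S) (hy : SepAt 1 P S) (hz : SepAt 2 P S) :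
    ((fun s => N3 P Q R d₁ d₂ d₃ s) '' S).ncard ≤ (P.ncard + 1) ^ 21 := by
  obtain ⟨R₁, h₁⟩ := h₁
  obtain ⟨R₂, h₂⟩ := h₂
  obtain ⟨R₃, h₃⟩ := h₃
  have hsep : ∀ i, SepAt i P S := by
    intro i
    fin_cases i
    · exact hx
    · exact hy
    · exact hz
  choose N hNP hNS hc hc' using fun i => aux_side i P S (hsep i)
  choose c hc using hc
  set F : ((Fin 3 → ℝ) → (Fin 3 → ℝ) → Prop) → (Fin 3 → ℝ) → Set (Fin 3 → ℝ) := fun W s =>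
    {p ∈ P | s ∈ S ∧ ∃ q ∈ Q, ∃ r ∈ R, W q r ∧ d₁ p q ∧ d₂ q r ∧ d₃ r s} with hF
  have hFP : ∀ W s, F W s ⊆ P := fun W s => Set.sep_subset _ _
  have hun : ∀ W W' a b, (F W '' S).ncard ≤ (P.ncard + 1) ^ a →
      (F W' '' S).ncard ≤ (P.ncard + 1) ^ b →
      (F (fun q r => W q r ∨ W' q r) '' S).ncard ≤ (P.ncard + 1) ^ (a + b) := by
    intro W W' a b h h'
    have e : F (fun q r => W q r ∨ W' q r) = fun s => F W s ∪ F W' s := by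
      funext s
      ext p
      simp only [hF, Set.mem_ofPred_eq, Set.mem_union]
      constructor
      · rintro ⟨hp, hs, q, hq, r, hr, w | w, hd⟩
        · exact Or.inl ⟨hp, hs, q, hq, r, hr, w, hd⟩
        · exact Or.inr ⟨hp, hs, q, hq, r, hr, w, hd⟩
      · rintro (⟨hp, hs, q, hq, r, hr, w, hd⟩ | ⟨hp, hs, q, hq, r, hr, w, hd⟩)
        · exact ⟨hp, hs, q, hq, r, hr, Or.inl w, hd⟩
        · exact ⟨hp, hs, q, hq, r, hr, Or.inr w, hd⟩
    rw [e]
    exact aux_union S hS _ _ _ a b h h'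
  have hpre : ∀ i, (F (fun q r => ∀ j, j ≠ i → ¬ N j (q j)) '' S).ncard ≤ (P.ncard + 1) ^ 1 := by
    intro i
    refine aux_chain P S hP _ (hFP _) ?_
    rintro p p' s s' ⟨hp, hs, q, hq, r, hr, w, e1, e2, e3⟩ ⟨hp', hs', q', hq', r', hr', w', e1', e2', e3'⟩
    have t : ∀ p p' q q' : Fin 3 → ℝ, p ∈ P → p' ∈ P → (∀ j, j ≠ i → ¬ N j (q j)) →
        (∀ j, j ≠ i → ¬ N j (q' j)) → d₁ p' q' →
        (R₁ i).holds (p i) (q' i) → d₁ p q' := by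
      intro p p' q q' hp hp' w w' e hh
      rw [h₁] at e ⊢
      intro j
      by_cases hj : j = i
      · subst hj; exact hh
      · exact (hc j (R₁ j) _ _ (hNP j _ hp) (w' j hj)).2
          ((hc j (R₁ j) _ _ (hNP j _ hp') (w' j hj)).1 (e j))
    rcases (R₁ i).ferrers _ _ _ _ ((h₁ _ _).1 e1 i) ((h₁ _ _).1 e1' i) with h | h
    · exact Or.inl ⟨hp, hs', q', hq', r', hr', w', t p p' q q' hp hp' w w' e1' h, e2', e3'⟩
    · exact Or.inr ⟨hp', hs, q, hq, r, hr, w, t p' p q' q hp' hp w' w e1 h, e2, e3⟩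
  have hchn : ∀ i, (F (fun q r => ∀ j, j ≠ i → N j (r j)) '' S).ncard ≤ (P.ncard + 1) ^ 1 := by
    intro i
    refine aux_chain P S hP _ (hFP _) ?_
    rintro p p' s s' ⟨hp, hs, q, hq, r, hr, w, e1, e2, e3⟩ ⟨hp', hs', q', hq', r', hr', w', e1', e2', e3'⟩
    have t : ∀ r s s' : Fin 3 → ℝ, s ∈ S → s' ∈ S → (∀ j, j ≠ i → N j (r j)) → d₃ r s →
        (R₃ i).holds (r i) (s' i) → d₃ r s' := by
      intro r s s' hs hs' w e hh
      rw [h₃] at e ⊢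
      intro j
      by_cases hj : j = i
      · subst hj; exact hh
      · exact (hc j (R₃ j) _ _ (w j hj) (hNS j _ hs')).2
          ((hc j (R₃ j) _ _ (w j hj) (hNS j _ hs)).1 (e j))
    rcases (R₃ i).ferrers _ _ _ _ ((h₃ _ _).1 e3 i) ((h₃ _ _).1 e3' i) with h | h
    · exact Or.inl ⟨hp, hs', q, hq, r, hr, w, e1, e2, t r s s' hs hs' w e3 h⟩
    · exact Or.inr ⟨hp', hs, q', hq', r', hr', w', e1', e2', t r' s' s hs' hs w' e3' h⟩
  have hmid : ∀ i, (F (fun q r => ∀ j, j ≠ i → N j (q j) ∧ ¬ N j (r j)) '' S).ncard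
      ≤ (P.ncard + 1) ^ 1 := by
    intro i
    refine aux_chain P S hP _ (hFP _) ?_
    rintro p p' s s' ⟨hp, hs, q, hq, r, hr, w, e1, e2, e3⟩ ⟨hp', hs', q', hq', r', hr', w', e1', e2', e3'⟩
    have t : ∀ q r r' : Fin 3 → ℝ, (∀ j, j ≠ i → N j (q j) ∧ ¬ N j (r j)) → (∀ j, j ≠ i → ¬ N j (r' j)) →
        d₂ q r → (R₂ i).holds (q i) (r' i) → d₂ q r' := by
      intro q r r' w w' e hh
      rw [h₂] at e ⊢
      intro j
      by_cases hj : j = i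
      · subst hj; exact hh
      · exact (hc j (R₂ j) _ _ (w j hj).1 (w' j hj)).2
          ((hc j (R₂ j) _ _ (w j hj).1 (w j hj).2).1 (e j))
    rcases (R₂ i).ferrers _ _ _ _ ((h₂ _ _).1 e2 i) ((h₂ _ _).1 e2' i) with h | h
    · exact Or.inl ⟨hp, hs', q, hq, r', hr', fun j hj => ⟨(w j hj).1, (w' j hj).2⟩, e1,
        t q r r' w (fun j hj => (w' j hj).2) e2 h, e3'⟩
    · exact Or.inr ⟨hp', hs, q', hq', r, hr, fun j hj => ⟨(w' j hj).1, (w j hj).2⟩, e1',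
        t q' r' r w' (fun j hj => (w j hj).2) e2' h, e3⟩
  have hhard : ∀ i j k, i ≠ j → i ≠ k → j ≠ k →
      (F (fun q r => N i (q i) ∧ N i (r i) ∧ N j (q j) ∧ ¬ N j (r j) ∧ ¬ N k (q k) ∧ ¬ N k (r k))
        '' S).ncard ≤ (P.ncard + 1) ^ 2 := by
    intro i j k hij hik hjk
    have := aux_hard P S
      {q ∈ Q | N i (q i) ∧ N j (q j) ∧ ¬ N k (q k) ∧ c k (R₁ k) ∧ c j (R₂ j) ∧ c i (R₃ i)}
      {r ∈ R | N i (r i) ∧ ¬ N j (r j) ∧ ¬ N k (r k)} hP hS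
      (fun p q => (R₁ i).holds (p i) (q i)) (fun p q => (R₁ j).holds (p j) (q j))
      (fun p q => (R₂ i).holds (p i) (q i)) (fun p q => (R₂ k).holds (p k) (q k))
      (fun p q => (R₃ j).holds (p j) (q j)) (fun p q => (R₃ k).holds (p k) (q k))
      (fun a a' b b' => (R₁ i).ferrers _ _ _ _) (fun a a' b b' => (R₁ j).ferrers _ _ _ _)
      (fun a a' b b' => (R₃ j).ferrers _ _ _ _)
      (CoordRel.dir (fun v : Fin 3 → ℝ => v i) _ _) (CoordRel.dir (fun v : Fin 3 → ℝ => v k) _ _)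
    refine le_trans (le_of_eq ?_) this
    congr 1
    refine Set.image_congr ?_
    intro s hs
    ext p
    simp only [hF, Set.mem_ofPred_eq, h₁, h₂, h₃, aux_perm i j k hij hik hjk]
    constructor
    · rintro ⟨hp, -, q, hq, r, hr, ⟨w1, w2, w3, w4, w5, w6⟩, ⟨a1, a2, a3⟩, ⟨b1, b2, b3⟩, ⟨c1, c2, c3⟩⟩
      exact ⟨hp, q, ⟨hq, w1, w3, w5, (hc k _ _ _ (hNP k _ hp) w5).1 a3, (hc j _ _ _ w3 w4).1 b2,
        (hc i _ _ _ w2 (hNS i _ hs)).1 c1⟩, r, ⟨hr, w2, w4, w6⟩, a1, a2, b1, b3, c2, c3⟩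
    · rintro ⟨hp, q, ⟨hq, w1, w3, w5, g1, g2, g3⟩, r, ⟨hr, w2, w4, w6⟩, a1, a2, b1, b3, c2, c3⟩
      exact ⟨hp, hs, q, hq, r, hr, ⟨w1, w2, w3, w4, w5, w6⟩,
        ⟨a1, a2, (hc k _ _ _ (hNP k _ hp) w5).2 g1⟩, ⟨b1, (hc j _ _ _ w3 w4).2 g2, b3⟩,
        ⟨(hc i _ _ _ w2 (hNS i _ hs)).2 g3, c2, c3⟩⟩
  have hpre3 := hun _ _ _ _ (hun _ _ _ _ (hpre 0) (hpre 1)) (hpre 2)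
  have hchn3 := hun _ _ _ _ (hun _ _ _ _ (hchn 0) (hchn 1)) (hchn 2)
  have hmid3 := hun _ _ _ _ (hun _ _ _ _ (hmid 0) (hmid 1)) (hmid 2)
  have hA := hun _ _ _ _ (hhard 0 1 2 (by decide) (by decide) (by decide))
    (hhard 0 2 1 (by decide) (by decide) (by decide))
  have hB := hun _ _ _ _ (hhard 1 0 2 (by decide) (by decide) (by decide))
    (hhard 1 2 0 (by decide) (by decide) (by decide))
  have hC := hun _ _ _ _ (hhard 2 0 1 (by decide) (by decide) (by decide))
    (hhard 2 1 0 (by decide) (by decide) (by decide))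
  have hall := hun _ _ _ _ (hun _ _ _ _ (hun _ _ _ _ hpre3 hchn3) hmid3)
    (hun _ _ _ _ (hun _ _ _ _ hA hB) hC)
  refine le_trans (le_of_eq ?_) hall
  congr 1
  refine Set.image_congr ?_
  intro s hs
  ext p
  simp only [N3, hF, Set.mem_ofPred_eq]
  constructor
  · rintro ⟨hp, q, hq, r, hr, hd⟩
    refine ⟨hp, hs, q, hq, r, hr, ?_, hd⟩
    simp only [Fin.forall_fin_succ, Fin.forall_fin_zero_pi, IsEmpty.forall_iff, Fin.succ_zero_eq_one,
      Fin.succ_one_eq_two, ne_eq]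
    clear hall hA hB hC hpre3 hchn3 hmid3 hhard hmid hchn hpre hun hFP
    by_cases a0 : N 0 (q 0) <;> by_cases a1 : N 1 (q 1) <;> by_cases a2 : N 2 (q 2) <;>
    by_cases b0 : N 0 (r 0) <;> by_cases b1 : N 1 (r 1) <;> by_cases b2 : N 2 (r 2) <;>
    simp [a0, a1, a2, b0, b1, b2]
  · rintro ⟨hp, -, q, hq, r, hr, -, hd⟩
    exact ⟨hp, q, hq, r, hr, hd⟩
end

section
/- Let P, Q, R, S ⊆ ℝ³ be finite sets such that all points of P ∪ Q ∪ R ∪ S have pairwise distinct coordinate values in each of the three axes, and let ◁₁, ◁₂, ◁₃ be generalized dominance relations. Then the number of distinct sets in the family {N³[s] : s ∈ S} is at most (|P| + 1)¹⁷¹. -/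
open Finset in
lemma sauer_aux {α : Type*} [DecidableEq α] (A : Finset α) (𝒜 : Finset (Finset α)) (d : ℕ)
    (hA : ∀ B ∈ 𝒜, B ⊆ A)
    (hd : ∀ C, C ⊆ A → C.card = d + 1 → ¬ 𝒜.Shatters C) :
    𝒜.card ≤ ∑ k ∈ range (d + 1), A.card.choose k := by
  classical
  refine (card_le_card_shatterer 𝒜).trans ?_
  have hsub : 𝒜.shatterer ⊆ (range (d + 1)).biUnion (fun k => A.powersetCard k) := by
    intro C hC
    rw [mem_shatterer] at hC
    have hCA : C ⊆ A := by
      obtain ⟨u, hu, h⟩ := hC (Subset.refl C)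
      have := hA u hu
      rw [inter_eq_left] at h
      exact h.trans this
    rw [mem_biUnion]
    refine ⟨C.card, ?_, ?_⟩
    · rw [mem_range]
      by_contra hlt
      push Not at hlt
      obtain ⟨D, hDC, hD⟩ := exists_subset_card_eq hlt
      exact hd D (hDC.trans hCA) hD (hC.mono_right hDC)
    · rw [mem_powersetCard]; exact ⟨hCA, rfl⟩
  refine (card_le_card hsub).trans (card_biUnion_le.trans ?_)
  simp

lemma sum_choose_le (n d : ℕ) :
    ∑ k ∈ Finset.range (d + 1), n.choose k ≤ (n + 1) ^ d := by
  rw [add_pow]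
  refine Finset.sum_le_sum fun k hk => ?_
  have hk' : k ≤ d := by simpa [Nat.lt_succ_iff] using hk
  have h1 : n.choose k ≤ n ^ k := Nat.choose_le_pow n k
  have h2 : 1 ≤ d.choose k := Nat.choose_pos hk'
  simp only [one_pow, mul_one]
  exact h1.trans (Nat.le_mul_of_pos_right _ h2)

/-- `A` is shattered by the sets `{a | M a s}`, `s ∈ T`. -/
def RSh {α β : Type*} (M : α → β → Prop) (T : Set β) (A : Finset α) : Prop :=
  ∀ B ⊆ A, ∃ s ∈ T, ∀ a ∈ A, a ∈ B ↔ M a s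

lemma RSh.mono {α β : Type*} {M : α → β → Prop} {T : Set β} {A A' : Finset α}
    (h : RSh M T A) (hA : A' ⊆ A) : RSh M T A' := by
  intro B hB
  obtain ⟨s, hs, h'⟩ := h B (hB.trans hA)
  exact ⟨s, hs, fun a ha => h' a (hA ha)⟩

lemma RSh.split {α β : Type*} {M : α → β → Prop} {T T₁ T₂ : Set β} {A A₁ A₂ : Finset α}
    (h : RSh M T A) (h₁ : A₁ ⊆ A) (h₂ : A₂ ⊆ A) (hd : Disjoint A₁ A₂)
    (hT : ∀ s ∈ T, s ∈ T₁ ∨ s ∈ T₂) : RSh M T₁ A₁ ∨ RSh M T₂ A₂ := by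
  classical
  by_contra hcon
  push Not at hcon
  obtain ⟨hn₁, hn₂⟩ := hcon
  unfold RSh at hn₁ hn₂
  push Not at hn₁ hn₂
  obtain ⟨B₁, hB₁, hn₁⟩ := hn₁
  obtain ⟨B₂, hB₂, hn₂⟩ := hn₂
  obtain ⟨s, hs, hsB⟩ := h (B₁ ∪ B₂) (Finset.union_subset (hB₁.trans h₁) (hB₂.trans h₂))
  rw [Finset.disjoint_left] at hd
  rcases hT s hs with hs | hs
  · obtain ⟨a, ha, h'⟩ := hn₁ s hs
    have := hsB a (h₁ ha)
    have hna : a ∉ B₂ := fun h => hd ha (hB₂ h)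
    simp only [Finset.mem_union, hna, or_false] at this
    tauto
  · obtain ⟨a, ha, h'⟩ := hn₂ s hs
    have := hsB a (h₂ ha)
    have hna : a ∉ B₁ := fun h => hd (hB₁ h) ha
    simp only [Finset.mem_union, hna, false_or] at this
    tauto

/-- no induced 2-matching -/
def IsChainRel {α β : Type*} (H : α → β → Prop) : Prop :=
  ∀ p₁ p₂ s₁ s₂, H p₁ s₁ → H p₂ s₂ → H p₁ s₂ ∨ H p₂ s₁

/-- induced 2-matchings are monotone w.r.t. suitable keys -/
def IsMonoRel {α β : Type*} (H : α → β → Prop) : Prop :=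
  ∃ (kp : α → ℝ) (ks : β → ℝ), ∀ p₁ p₂ s₁ s₂, H p₁ s₁ → H p₂ s₂ → ¬ H p₁ s₂ → ¬ H p₂ s₁ →
    (kp p₁ < kp p₂ ∧ ks s₁ < ks s₂) ∨ (kp p₂ < kp p₁ ∧ ks s₂ < ks s₁)

lemma IsChainRel.first {α β : Type*} {H : α → β → Prop} (h : IsChainRel H) (A : Finset α)
    (hA : A.Nonempty) : ∃ e ∈ A, ∀ s, (∃ a ∈ A, H a s) → H e s := by
  classical
  induction hA using Finset.Nonempty.cons_induction with
  | singleton a => exact ⟨a, by simp, by simp⟩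
  | cons a A ha hA ih =>
    obtain ⟨e, he, ih⟩ := ih
    by_cases hc : ∀ s, H a s → H e s
    · refine ⟨e, by simp [he], ?_⟩
      rintro s ⟨b, hb, hbs⟩
      rcases Finset.mem_cons.1 hb with rfl | hb
      · exact hc s hbs
      · exact ih s ⟨b, hb, hbs⟩
    · push Not at hc
      obtain ⟨s₀, h1, h2⟩ := hc
      refine ⟨a, by simp, ?_⟩
      rintro s ⟨b, hb, hbs⟩
      rcases Finset.mem_cons.1 hb with rfl | hb
      · exact hbs
      · have := ih s ⟨b, hb, hbs⟩
        rcases h a e s₀ s h1 this with h | h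
        · exact h
        · exact absurd h h2

lemma IsMonoRel.three {α β : Type*} [DecidableEq α] {H : α → β → Prop} (h : IsMonoRel H)
    (T : Set β) (C : Finset α) (hC : C.card = 3) : ¬ RSh H T C := by
  obtain ⟨kp, ks, h⟩ := h
  have key : ∀ a b c : α, a ≠ b → b ≠ c → kp a ≤ kp b → kp b ≤ kp c →
      ¬ RSh H T {a, b, c} := by
    intro a b c hab hbc h1 h2 hR
    obtain ⟨s, -, hs⟩ := hR {a, c} (by intro x; simp; tauto)
    obtain ⟨s', -, hs'⟩ := hR {b} (by intro x; simp; tauto)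
    have a1 : H a s := (hs a (by simp)).1 (by simp)
    have c1 : H c s := (hs c (by simp)).1 (by simp)
    have b1 : ¬ H b s := fun hh => by
      have := (hs b (by simp)).2 hh
      simp at this; tauto
    have b2 : H b s' := (hs' b (by simp)).1 (by simp)
    have a2 : ¬ H a s' := fun hh => by
      have := (hs' a (by simp)).2 hh
      simp at this; tauto
    have c2 : ¬ H c s' := fun hh => by
      have := (hs' c (by simp)).2 hh
      simp at this; exact hbc this.symm
    rcases h a b s s' a1 b2 a2 b1 with h3 | h3 <;> rcases h b c s' s b2 c1 b1 c2 with h4 | h4 <;>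
      linarith [h3.1, h3.2, h4.1, h4.2]
  intro hR
  obtain ⟨a, b, c, hab, hac, hbc, rfl⟩ := Finset.card_eq_three.1 hC
  have e1 : ({a, c, b} : Finset α) = {a, b, c} := by ext; simp; tauto
  have e2 : ({b, a, c} : Finset α) = {a, b, c} := by ext; simp; tauto
  have e3 : ({b, c, a} : Finset α) = {a, b, c} := by ext; simp; tauto
  have e4 : ({c, a, b} : Finset α) = {a, b, c} := by ext; simp; tauto
  have e5 : ({c, b, a} : Finset α) = {a, b, c} := by ext; simp; tauto
  rcases le_total (kp a) (kp b) with h1 | h1 <;> rcases le_total (kp b) (kp c) with h2 | h2 <;>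
    rcases le_total (kp a) (kp c) with h3 | h3
  · exact key a b c hab hbc h1 h2 hR
  · exact key a b c hab hbc h1 h2 hR
  · exact key a c b hac hbc.symm h3 h2 (e1 ▸ hR)
  · exact key c a b hac.symm hab h3 h1 (e4 ▸ hR)
  · exact key b a c hab.symm hac h1 h3 (e2 ▸ hR)
  · exact key b c a hbc hac.symm h2 h3 (e3 ▸ hR)
  · exact key c b a hbc.symm hab.symm h2 h1 (e5 ▸ hR)
  · exact key c b a hbc.symm hab.symm h2 h1 (e5 ▸ hR)

open Finset in
lemma union_bound {α β τ : Type*} (M : α → β → Prop) (T : Set β) (A : Finset α)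
    (𝒞 𝒽 : Finset τ) (H : τ → α → β → Prop)
    (hM : ∀ a ∈ A, ∀ s ∈ T, M a s ↔ ∃ t, (t ∈ 𝒞 ∨ t ∈ 𝒽) ∧ H t a s)
    (hC : ∀ t ∈ 𝒞, IsChainRel (H t)) (hH : ∀ t ∈ 𝒽, IsMonoRel (H t))
    (c h m : ℕ) (hc : 𝒞.card ≤ c) (hh : 𝒽.card ≤ h) (hm : 0 < m)
    (hbig : (1 + m + m.choose 2) ^ h < 2 ^ m) (hA : c + m ≤ A.card) : ¬ RSh M T A := by
  classical
  intro hR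
  have hne : A.Nonempty := card_pos.1 (by omega)
  have hfirst : ∀ t, ∃ e, t ∈ 𝒞 → e ∈ A ∧ ∀ s, (∃ a ∈ A, H t a s) → H t e s := by
    intro t
    by_cases ht : t ∈ 𝒞
    · obtain ⟨e, he, h⟩ := (hC t ht).first A hne
      exact ⟨e, fun _ => ⟨he, h⟩⟩
    · exact ⟨hne.choose, fun h => absurd h ht⟩
  choose e he using hfirst
  have hcard : m ≤ (A \ 𝒞.image e).card := by
    have h1 := le_card_sdiff (𝒞.image e) A
    have h2 : (𝒞.image e).card ≤ 𝒞.card := card_image_le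
    omega
  obtain ⟨D, hDsub, hDm⟩ := exists_subset_card_eq hcard
  have hDA : D ⊆ A := hDsub.trans sdiff_subset
  have hsB : ∀ B, ∃ s, B ⊆ D → s ∈ T ∧ ∀ a ∈ D, a ∈ B ↔ ∃ t ∈ 𝒽, H t a s := by
    intro B
    by_cases hB : B ⊆ D
    · obtain ⟨s, hs, h⟩ := hR B (hB.trans hDA)
      refine ⟨s, fun _ => ⟨hs, fun a ha => ?_⟩⟩
      rw [h a (hDA ha), hM a (hDA ha) s hs]
      constructor
      · rintro ⟨t, ht | ht, hts⟩
        · exfalso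
          obtain ⟨heA, he'⟩ := he t ht
          have h1 := he' s ⟨a, hDA ha, hts⟩
          have h2 : e t ∈ B := (h _ heA).2 ((hM _ heA s hs).2 ⟨t, Or.inl ht, h1⟩)
          have h3 := hDsub (hB h2)
          rw [mem_sdiff] at h3
          exact h3.2 (mem_image_of_mem e ht)
        · exact ⟨t, ht, hts⟩
      · rintro ⟨t, ht, hts⟩
        exact ⟨t, Or.inr ht, hts⟩
    · obtain ⟨s, -⟩ := hR ∅ (by simp)
      exact ⟨s, fun h => absurd h hB⟩
  choose sB hsB using hsB
  let fam : τ → Finset (Finset α) := fun t =>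
    D.powerset.filter (fun B => ∃ s ∈ T, B = D.filter (fun a => H t a s))
  have hfam : ∀ t ∈ 𝒽, (fam t).card ≤ 1 + m + m.choose 2 := by
    intro t ht
    have := sauer_aux D (fam t) 2 (fun B hB => by
      simp only [fam, mem_filter, mem_powerset] at hB; exact hB.1) (by
      intro C hCD hC3 hSh
      refine (hH t ht).three T C hC3 ?_
      intro B hB
      obtain ⟨u, hu, hu'⟩ := hSh hB
      simp only [fam, mem_filter, mem_powerset] at hu
      obtain ⟨-, s, hs, rfl⟩ := hu
      refine ⟨s, hs, fun a ha => ?_⟩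
      rw [← hu']
      simp [ha, hCD ha])
    simpa [sum_range_succ, hDm] using this
  have hinj : D.powerset.card ≤ (𝒽.pi (fun t => fam t)).card := by
    refine card_le_card_of_injOn (fun B => fun t _ => D.filter (fun a => H t a (sB B))) ?_ ?_
    · intro B hB
      have hB : B ⊆ D := by simpa using hB
      simp only [mem_coe, mem_pi, fam, mem_filter, mem_powerset]
      intro t ht
      exact ⟨filter_subset _ _, sB B, (hsB B hB).1, rfl⟩
    · intro B hB B' hB' heq
      have hB : B ⊆ D := by simpa using hB
      have hB' : B' ⊆ D := by simpa using hB'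
      have hkey : ∀ t ∈ 𝒽, ∀ a ∈ D, H t a (sB B) ↔ H t a (sB B') := by
        intro t ht a ha
        have := congrFun (congrFun heq t) ht
        have := congrArg (fun X => a ∈ X) this
        simpa [ha] using this
      ext a
      by_cases ha : a ∈ D
      · rw [(hsB B hB).2 a ha, (hsB B' hB').2 a ha]
        constructor
        · rintro ⟨t, ht, h⟩; exact ⟨t, ht, (hkey t ht a ha).1 h⟩
        · rintro ⟨t, ht, h⟩; exact ⟨t, ht, (hkey t ht a ha).2 h⟩
      · exact ⟨fun h => absurd (hB h) ha, fun h => absurd (hB' h) ha⟩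
  rw [card_powerset, card_pi, hDm] at hinj
  have h1 : ∏ t ∈ 𝒽, (fam t).card ≤ (1 + m + m.choose 2) ^ 𝒽.card :=
    prod_le_pow_card _ _ _ hfam
  have h2 : (1 + m + m.choose 2) ^ 𝒽.card ≤ (1 + m + m.choose 2) ^ h :=
    Nat.pow_le_pow_right (by omega) hh
  omega

/-- relation types of terms: `P`, `M`, `S` omit the link rs, qr, pq respectively -/
inductive Ty
  | P
  | M
  | S

instance : DecidableEq Ty := fun a b =>
  match a, b with
  | .P, .P => isTrue rfl
  | .M, .M => isTrue rfl
  | .S, .S => isTrue rfl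
  | .P, .M => isFalse nofun
  | .P, .S => isFalse nofun
  | .M, .P => isFalse nofun
  | .M, .S => isFalse nofun
  | .S, .P => isFalse nofun
  | .S, .M => isFalse nofun

instance : Fintype Ty := ⟨{.P, .M, .S}, by intro t; cases t <;> decide⟩

/-- the constraint in one coordinate of a term of type `t` -/
def Ty.con (c₁ c₂ c₃ : CoordRel) (p q r s : ℝ) (t : Ty) : Prop :=
  (t ≠ .S → c₁.holds p q) ∧ (t ≠ .M → c₂.holds q r) ∧ (t ≠ .P → c₃.holds r s)

/-- the types needed when p is below (`true`) or above (`false`) the threshold and s opposite -/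
def tset : CoordRel → CoordRel → CoordRel → Bool → Finset Ty
  | .top, _, _, _ => {.S}
  | _, _, .top, _ => {.P}
  | _, .top, _, _ => {.M}
  | .lt, .lt, .lt, true => {.P, .M, .S}
  | .lt, .lt, .gt, true => {.M, .S}
  | .lt, .gt, .lt, true => {.P, .M, .S}
  | .lt, .gt, .gt, true => {.S}
  | .gt, .lt, .lt, true => {.P, .M}
  | .gt, .lt, .gt, true => {.M}
  | .gt, .gt, .lt, true => {.P}
  | .gt, .gt, .gt, true => ∅
  | .gt, .gt, .gt, false => {.P, .M, .S}
  | .gt, .gt, .lt, false => {.M, .S}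
  | .gt, .lt, .gt, false => {.P, .M, .S}
  | .gt, .lt, .lt, false => {.S}
  | .lt, .gt, .gt, false => {.P, .M}
  | .lt, .gt, .lt, false => {.M}
  | .lt, .lt, .gt, false => {.P}
  | .lt, .lt, .lt, false => ∅

lemma tset_small (c₁ c₂ c₃ : CoordRel) : ∃ f : Bool, (tset c₁ c₂ c₃ (!f)).card ≤ 1 := by
  cases c₁ <;> cases c₂ <;> cases c₃ <;>
    first | exact ⟨true, by decide⟩ | exact ⟨false, by decide⟩

/-- separation of two reals by a threshold -/
def sepR (b : Bool) (p μ s : ℝ) : Prop := bif b then p < μ ∧ μ < s else s < μ ∧ μ < p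

/-- near side: the side of `p` -/
def near (b : Bool) (μ x : ℝ) : Prop := bif b then x < μ else μ < x

/-- side condition for q -/
def Dq (c₁ c₂ c₃ : CoordRel) (b : Bool) (μ : ℝ) (t : Ty) (x : ℝ) : Prop :=
  match c₁, c₂, c₃ with
  | .top, _, _ => True
  | _, _, .top => True
  | _, .top, _ => True
  | _, .lt, _ => match t with
    | .P => near b μ x
    | .M => x < μ
    | .S => near (!b) μ x
  | _, .gt, _ => match t with
    | .P => near b μ x
    | .M => μ < x
    | .S => near (!b) μ x

/-- side condition for r -/
def Dr (c₁ c₂ c₃ : CoordRel) (b : Bool) (μ : ℝ) (t : Ty) (x : ℝ) : Prop :=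
  match c₁, c₂, c₃ with
  | .top, _, _ => True
  | _, _, .top => True
  | _, .top, _ => True
  | _, .lt, _ => match t with
    | .P => near b μ x
    | .M => μ < x
    | .S => near (!b) μ x
  | _, .gt, _ => match t with
    | .P => near b μ x
    | .M => x < μ
    | .S => near (!b) μ x

lemma coord_split (c₁ c₂ c₃ : CoordRel) (b : Bool) (p q r s μ : ℝ) (hq : q ≠ μ) (hr : r ≠ μ)
    (hsep : sepR b p μ s) :
    (c₁.holds p q ∧ c₂.holds q r ∧ c₃.holds r s) ↔
      ∃ t ∈ tset c₁ c₂ c₃ b, (Dq c₁ c₂ c₃ b μ t q ∧ Dr c₁ c₂ c₃ b μ t r) ∧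
        t.con c₁ c₂ c₃ p q r s := by
  rcases lt_or_gt_of_ne hq with hq | hq <;> rcases lt_or_gt_of_ne hr with hr | hr <;>
  cases c₁ <;> cases c₂ <;> cases c₃ <;> cases b <;>
  simp only [sepR, cond_true, cond_false] at hsep <;>
  simp [tset, Dq, Dr, near, Ty.con, CoordRel.holds] <;> grind

/-- Relation of a term. -/
def HT (c₁ c₂ c₃ : Fin 3 → CoordRel) (Q R : Set (Fin 3 → ℝ)) (t : Fin 3 → Ty)
    (p s : Fin 3 → ℝ) : Prop :=
  ∃ q ∈ Q, ∃ r ∈ R, ∀ i, (t i).con (c₁ i) (c₂ i) (c₃ i) (p i) (q i) (r i) (s i)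

lemma holds_ferrers (c : CoordRel) (a₁ b₁ a₂ b₂ : ℝ) (h₁ : c.holds a₁ b₁) (h₂ : c.holds a₂ b₂) :
    c.holds a₁ b₂ ∨ c.holds a₂ b₁ := by
  cases c <;> simp only [CoordRel.holds] at * <;> grind

lemma HT_chain (c₁ c₂ c₃ : Fin 3 → CoordRel) (Q R : Set (Fin 3 → ℝ)) (t : Fin 3 → Ty)
    (ht : ¬ Function.Injective t) : IsChainRel (HT c₁ c₂ c₃ Q R t) := by
  have : ∃ i j k : Fin 3, (∀ l, l = i ∨ l = j ∨ l = k) ∧ t i = t j := by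
    unfold Function.Injective at ht
    push Not at ht
    obtain ⟨i, j, h, hij⟩ := ht
    have : ∀ i j : Fin 3, i ≠ j → ∃ k, ∀ l, l = i ∨ l = j ∨ l = k := by decide
    obtain ⟨k, hk⟩ := this i j hij
    exact ⟨i, j, k, hk, h⟩
  obtain ⟨i, j, k, hall, hij⟩ := this
  have hfor : ∀ {X : Fin 3 → Prop}, X i → X j → X k → ∀ l, X l := by
    intro X hi hj hk l
    rcases hall l with rfl | rfl | rfl <;> assumption
  rintro p₁ p₂ s₁ s₂ ⟨q₁, hq₁, r₁, hr₁, h₁⟩ ⟨q₂, hq₂, r₂, hr₂, h₂⟩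
  cases hti : t i with
  | S =>
    have htj : t j = .S := hij ▸ hti
    have hor : (t k ≠ .S → (c₁ k).holds (p₁ k) (q₂ k)) ∨
        (t k ≠ .S → (c₁ k).holds (p₂ k) (q₁ k)) := by
      by_cases hk : t k = .S
      · exact Or.inl fun h => absurd hk h
      · rcases holds_ferrers _ _ _ _ _ ((h₁ k).1 hk) ((h₂ k).1 hk) with h | h
        · exact Or.inl fun _ => h
        · exact Or.inr fun _ => h
    rcases hor with h | h
    · exact Or.inl ⟨q₂, hq₂, r₂, hr₂, fun l => ⟨hfor (X := fun l => t l ≠ .S →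
        (c₁ l).holds (p₁ l) (q₂ l)) (fun h => absurd hti h) (fun h => absurd htj h) h l,
        (h₂ l).2.1, (h₂ l).2.2⟩⟩
    · exact Or.inr ⟨q₁, hq₁, r₁, hr₁, fun l => ⟨hfor (X := fun l => t l ≠ .S →
        (c₁ l).holds (p₂ l) (q₁ l)) (fun h => absurd hti h) (fun h => absurd htj h) h l,
        (h₁ l).2.1, (h₁ l).2.2⟩⟩
  | M =>
    have htj : t j = .M := hij ▸ hti
    have hor : (t k ≠ .M → (c₂ k).holds (q₁ k) (r₂ k)) ∨
        (t k ≠ .M → (c₂ k).holds (q₂ k) (r₁ k)) := by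
      by_cases hk : t k = .M
      · exact Or.inl fun h => absurd hk h
      · rcases holds_ferrers _ _ _ _ _ ((h₁ k).2.1 hk) ((h₂ k).2.1 hk) with h | h
        · exact Or.inl fun _ => h
        · exact Or.inr fun _ => h
    rcases hor with h | h
    · exact Or.inl ⟨q₁, hq₁, r₂, hr₂, fun l => ⟨(h₁ l).1, hfor (X := fun l => t l ≠ .M →
        (c₂ l).holds (q₁ l) (r₂ l)) (fun h => absurd hti h) (fun h => absurd htj h) h l,
        (h₂ l).2.2⟩⟩
    · exact Or.inr ⟨q₂, hq₂, r₁, hr₁, fun l => ⟨(h₂ l).1, hfor (X := fun l => t l ≠ .M →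
        (c₂ l).holds (q₂ l) (r₁ l)) (fun h => absurd hti h) (fun h => absurd htj h) h l,
        (h₁ l).2.2⟩⟩
  | P =>
    have htj : t j = .P := hij ▸ hti
    have hor : (t k ≠ .P → (c₃ k).holds (r₁ k) (s₂ k)) ∨
        (t k ≠ .P → (c₃ k).holds (r₂ k) (s₁ k)) := by
      by_cases hk : t k = .P
      · exact Or.inl fun h => absurd hk h
      · rcases holds_ferrers _ _ _ _ _ ((h₁ k).2.2 hk) ((h₂ k).2.2 hk) with h | h
        · exact Or.inl fun _ => h
        · exact Or.inr fun _ => h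
    rcases hor with h | h
    · exact Or.inl ⟨q₁, hq₁, r₁, hr₁, fun l => ⟨(h₁ l).1, (h₁ l).2.1, hfor (X := fun l => t l ≠ .P →
        (c₃ l).holds (r₁ l) (s₂ l)) (fun h => absurd hti h) (fun h => absurd htj h) h l⟩⟩
    · exact Or.inr ⟨q₂, hq₂, r₂, hr₂, fun l => ⟨(h₂ l).1, (h₂ l).2.1, hfor (X := fun l => t l ≠ .P →
        (c₃ l).holds (r₂ l) (s₁ l)) (fun h => absurd hti h) (fun h => absurd htj h) h l⟩⟩

/-- sign of a coordinate relation -/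
def CoordRel.sg : CoordRel → ℝ
  | .lt => 1
  | .gt => -1
  | .top => 1

/-- In a two-coordinate link, an induced matching is ordered oppositely in both coordinates. -/
lemma link (c d : CoordRel) (u₁ u₂ v₁ v₂ a₁ a₂ b₁ b₂ : ℝ)
    (h₁ : c.holds u₁ v₁) (k₁ : d.holds a₁ b₁) (h₂ : c.holds u₂ v₂) (k₂ : d.holds a₂ b₂)
    (n₁ : ¬ (c.holds u₁ v₂ ∧ d.holds a₁ b₂)) (n₂ : ¬ (c.holds u₂ v₁ ∧ d.holds a₂ b₁)) :
    ((u₁ < u₂ ∧ v₁ < v₂) ∧ (c.sg * d.sg = 1 ∧ a₂ < a₁ ∧ b₂ < b₁ ∨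
        c.sg * d.sg = -1 ∧ a₁ < a₂ ∧ b₁ < b₂)) ∨
    ((u₂ < u₁ ∧ v₂ < v₁) ∧ (c.sg * d.sg = 1 ∧ a₁ < a₂ ∧ b₁ < b₂ ∨
        c.sg * d.sg = -1 ∧ a₂ < a₁ ∧ b₂ < b₁)) := by
  cases c <;> cases d <;> simp only [CoordRel.holds, CoordRel.sg] at * <;> norm_num <;> grind

lemma HT_mono (c₁ c₂ c₃ : Fin 3 → CoordRel) (Q R : Set (Fin 3 → ℝ)) (t : Fin 3 → Ty)
    (ht : Function.Injective t) : IsMonoRel (HT c₁ c₂ c₃ Q R t) := by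
  have hsurj : Function.Surjective t :=
    ((Fintype.bijective_iff_injective_and_card t).2 ⟨ht, by decide⟩).2
  obtain ⟨x, hx⟩ := hsurj .P
  obtain ⟨y, hy⟩ := hsurj .S
  obtain ⟨z, hz⟩ := hsurj .M
  have hall : ∀ l, l = x ∨ l = y ∨ l = z := by
    intro l
    cases hl : t l with
    | P => exact Or.inl (ht (hl.trans hx.symm))
    | S => exact Or.inr (Or.inl (ht (hl.trans hy.symm)))
    | M => exact Or.inr (Or.inr (ht (hl.trans hz.symm)))
  have hiff : ∀ p q r s : Fin 3 → ℝ,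
      (∀ i, (t i).con (c₁ i) (c₂ i) (c₃ i) (p i) (q i) (r i) (s i)) ↔
      ((c₁ z).holds (p z) (q z) ∧ (c₁ x).holds (p x) (q x)) ∧
      ((c₂ x).holds (q x) (r x) ∧ (c₂ y).holds (q y) (r y)) ∧
      ((c₃ y).holds (r y) (s y) ∧ (c₃ z).holds (r z) (s z)) := by
    intro p q r s
    constructor
    · intro h
      have hx' := h x
      have hy' := h y
      have hz' := h z
      simp [Ty.con, hx] at hx'
      simp [Ty.con, hy] at hy'
      simp [Ty.con, hz] at hz'
      tauto
    · intro h l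
      rcases hall l with rfl | rfl | rfl
      · simp [Ty.con, hx]; tauto
      · simp [Ty.con, hy]; tauto
      · simp [Ty.con, hz]; tauto
  refine ⟨fun p => p z, fun s => -(((c₁ z).sg * (c₁ x).sg) * ((c₂ x).sg * (c₂ y).sg) *
    ((c₃ y).sg * (c₃ z).sg)) * s z, ?_⟩
  rintro p₁ p₂ s₁ s₂ ⟨q₁, hq₁, r₁, hr₁, h₁⟩ ⟨q₂, hq₂, r₂, hr₂, h₂⟩ n₁ n₂
  rw [hiff] at h₁ h₂
  obtain ⟨⟨a1, a2⟩, ⟨a3, a4⟩, ⟨a5, a6⟩⟩ := h₁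
  obtain ⟨⟨b1, b2⟩, ⟨b3, b4⟩, ⟨b5, b6⟩⟩ := h₂
  have N₁ : ∀ q ∈ Q, ∀ r ∈ R, ¬ _ := fun q hq r hr h => n₁ ⟨q, hq, r, hr, (hiff _ _ _ _).2 h⟩
  have N₂ : ∀ q ∈ Q, ∀ r ∈ R, ¬ _ := fun q hq r hr h => n₂ ⟨q, hq, r, hr, (hiff _ _ _ _).2 h⟩
  have L1 := link (c₁ z) (c₁ x) (p₁ z) (p₂ z) (q₁ z) (q₂ z) (p₁ x) (p₂ x) (q₁ x) (q₂ x)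
    a1 a2 b1 b2 (fun h => N₁ q₂ hq₂ r₂ hr₂ ⟨h, ⟨b3, b4⟩, ⟨b5, b6⟩⟩)
    (fun h => N₂ q₁ hq₁ r₁ hr₁ ⟨h, ⟨a3, a4⟩, ⟨a5, a6⟩⟩)
  have L2 := link (c₂ x) (c₂ y) (q₁ x) (q₂ x) (r₁ x) (r₂ x) (q₁ y) (q₂ y) (r₁ y) (r₂ y)
    a3 a4 b3 b4 (fun h => N₁ q₁ hq₁ r₂ hr₂ ⟨⟨a1, a2⟩, h, ⟨b5, b6⟩⟩)
    (fun h => N₂ q₂ hq₂ r₁ hr₁ ⟨⟨b1, b2⟩, h, ⟨a5, a6⟩⟩)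
  have L3 := link (c₃ y) (c₃ z) (r₁ y) (r₂ y) (s₁ y) (s₂ y) (r₁ z) (r₂ z) (s₁ z) (s₂ z)
    a5 a6 b5 b6 (fun h => N₁ q₁ hq₁ r₁ hr₁ ⟨⟨a1, a2⟩, ⟨a3, a4⟩, h⟩)
    (fun h => N₂ q₂ hq₂ r₂ hr₂ ⟨⟨b1, b2⟩, ⟨b3, b4⟩, h⟩)
  clear N₁ N₂ n₁ n₂ hiff
  rcases L1 with ⟨l1, ⟨e1, m1⟩ | ⟨e1, m1⟩⟩ | ⟨l1, ⟨e1, m1⟩ | ⟨e1, m1⟩⟩ <;>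
  rcases L2 with ⟨l2, ⟨e2, m2⟩ | ⟨e2, m2⟩⟩ | ⟨l2, ⟨e2, m2⟩ | ⟨e2, m2⟩⟩ <;>
  first
  | (exfalso; linarith [m1.2, l2.1])
  | skip <;>
  rcases L3 with ⟨l3, ⟨e3, m3⟩ | ⟨e3, m3⟩⟩ | ⟨l3, ⟨e3, m3⟩ | ⟨e3, m3⟩⟩ <;>
  first
  | (exfalso; linarith [m2.2, l3.1])
  | (simp only [e1, e2, e3]
     first
     | (left; constructor <;> linarith [l1.1, m3.2])
     | (right; constructor <;> linarith [l1.1, m3.2]))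

open Finset in
lemma cut_real (V E : Finset ℝ) (a b : ℕ) (ha : 0 < a) (hb : 0 < b) (h : a + b ≤ V.card) :
    ∃ μ, μ ∉ E ∧ a ≤ (V.filter (fun v => v < μ)).card ∧
      b ≤ (V.filter (fun v => μ < v)).card := by
  let f : Fin V.card ↪o ℝ := V.orderEmbOfFin rfl
  have hf : ∀ i, f i ∈ V := fun i => V.orderEmbOfFin_mem rfl i
  have hxy : f ⟨a - 1, by omega⟩ < f ⟨a, by omega⟩ := by
    apply f.strictMono
    simp only [Fin.mk_lt_mk]; omega
  obtain ⟨μ, hμ, hE⟩ := (Set.Ioo_infinite hxy).exists_notMem_finset E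
  refine ⟨μ, hE, ?_, ?_⟩
  · let g : Fin a → ℝ := fun i => f ⟨i.1, by omega⟩
    have hg : Function.Injective g := by
      intro i j hij
      have := f.injective hij
      simpa [Fin.ext_iff] using this
    have hc : (univ.image g).card = a := by rw [card_image_of_injective _ hg]; simp
    rw [← hc]
    apply card_le_card
    intro v hv
    obtain ⟨i, -, rfl⟩ := mem_image.1 hv
    refine mem_filter.2 ⟨hf _, lt_of_le_of_lt (f.monotone ?_) hμ.1⟩
    simp only [Fin.mk_le_mk]; omega
  · let g : Fin b → ℝ := fun i => f ⟨a + i.1, by omega⟩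
    have hg : Function.Injective g := by
      intro i j hij
      have := f.injective hij
      simpa [Fin.ext_iff] using this
    have hc : (univ.image g).card = b := by rw [card_image_of_injective _ hg]; simp
    rw [← hc]
    apply card_le_card
    intro v hv
    obtain ⟨i, -, rfl⟩ := mem_image.1 hv
    refine mem_filter.2 ⟨hf _, lt_of_lt_of_le hμ.2 (f.monotone ?_)⟩
    simp only [Fin.mk_le_mk]; omega

open Finset in
lemma cut_one (M : (Fin 3 → ℝ) → (Fin 3 → ℝ) → Prop) (T : Set (Fin 3 → ℝ))
    (A : Finset (Fin 3 → ℝ)) (i : Fin 3) (hinj : ∀ x ∈ A, ∀ y ∈ A, x i = y i → x = y)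
    (E : Finset ℝ) (hTE : ∀ s ∈ T, s i ∈ E) (k : Bool → ℕ) (hk : ∀ b, 0 < k b)
    (h : k true + k false ≤ A.card) (hR : RSh M T A) :
    ∃ (b : Bool) (μ : ℝ) (A' : Finset (Fin 3 → ℝ)) (T' : Set (Fin 3 → ℝ)), μ ∉ E ∧ A' ⊆ A ∧
      T' ⊆ T ∧ k b ≤ A'.card ∧ RSh M T' A' ∧ ∀ a ∈ A', ∀ s ∈ T', sepR b (a i) μ (s i) := by
  classical
  have hcard : (A.image (fun x => x i)).card = A.card :=
    card_image_of_injOn (fun x hx y hy hxy => hinj x hx y hy hxy)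
  obtain ⟨μ, hμ, h1, h2⟩ := cut_real (A.image (fun x => x i)) E (k true) (k false) (hk _) (hk _)
    (by rw [hcard]; exact h)
  rw [filter_image] at h1 h2
  replace h1 := h1.trans card_image_le
  replace h2 := h2.trans card_image_le
  have := hR.split (A₁ := A.filter (fun x => x i < μ)) (A₂ := A.filter (fun x => μ < x i))
    (T₁ := {s ∈ T | μ < s i}) (T₂ := {s ∈ T | s i < μ}) (filter_subset _ _) (filter_subset _ _)
    (by
      rw [disjoint_left]
      intro x hx hx'
      exact lt_asymm (mem_filter.1 hx).2 (mem_filter.1 hx').2)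
    (by
      intro s hs
      have : s i ≠ μ := fun h => hμ (h ▸ hTE s hs)
      rcases lt_or_gt_of_ne this with h | h
      · exact Or.inr ⟨hs, h⟩
      · exact Or.inl ⟨hs, h⟩)
  rcases this with hr | hr
  · refine ⟨true, μ, _, _, hμ, filter_subset _ _, fun s hs => hs.1, h1, hr, ?_⟩
    intro a ha s hs
    exact ⟨(mem_filter.1 ha).2, hs.2⟩
  · refine ⟨false, μ, _, _, hμ, filter_subset _ _, fun s hs => hs.1, h2, hr, ?_⟩
    intro a ha s hs
    exact ⟨hs.2, (mem_filter.1 ha).2⟩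

lemma cut_three (M : (Fin 3 → ℝ) → (Fin 3 → ℝ) → Prop) (T : Set (Fin 3 → ℝ))
    (A : Finset (Fin 3 → ℝ)) (hinj : ∀ i, ∀ x ∈ A, ∀ y ∈ A, x i = y i → x = y)
    (E : Finset ℝ) (hTE : ∀ i, ∀ s ∈ T, s i ∈ E) (k : Bool → Bool → Bool → ℕ)
    (hk : ∀ a b c, 0 < k a b c)
    (h : (k true true true + k true true false + (k true false true + k true false false)) +
      (k false true true + k false true false + (k false false true + k false false false))
        ≤ A.card) (hR : RSh M T A) :
    ∃ (o : Fin 3 → Bool) (μ : Fin 3 → ℝ) (A' : Finset (Fin 3 → ℝ)) (T' : Set (Fin 3 → ℝ)),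
      (∀ i, μ i ∉ E) ∧ k (o 0) (o 1) (o 2) ≤ A'.card ∧ RSh M T' A' ∧
      ∀ i, ∀ a ∈ A', ∀ s ∈ T', sepR (o i) (a i) (μ i) (s i) := by
  obtain ⟨b₀, μ₀, A₀, T₀, hμ₀, hA₀, hT₀, hc₀, hR₀, hs₀⟩ := cut_one M T A 0 (hinj 0) E (hTE 0)
    (fun b => k b true true + k b true false + (k b false true + k b false false))
    (fun b => by have := hk b true true; omega) h hR
  obtain ⟨b₁, μ₁, A₁, T₁, hμ₁, hA₁, hT₁, hc₁, hR₁, hs₁⟩ := cut_one M T₀ A₀ 1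
    (fun x hx y hy => hinj 1 x (hA₀ hx) y (hA₀ hy)) E (fun s hs => hTE 1 s (hT₀ hs))
    (fun b => k b₀ b true + k b₀ b false)
    (fun b => by have := hk b₀ b true; omega) hc₀ hR₀
  obtain ⟨b₂, μ₂, A₂, T₂, hμ₂, hA₂, hT₂, hc₂, hR₂, hs₂⟩ := cut_one M T₁ A₁ 2
    (fun x hx y hy => hinj 2 x (hA₀ (hA₁ hx)) y (hA₀ (hA₁ hy))) E
    (fun s hs => hTE 2 s (hT₀ (hT₁ hs)))
    (fun b => k b₀ b₁ b) (fun b => hk b₀ b₁ b) hc₁ hR₁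
  refine ⟨![b₀, b₁, b₂], ![μ₀, μ₁, μ₂], A₂, T₂, ?_, hc₂, hR₂, ?_⟩
  · intro i; fin_cases i <;> assumption
  · intro i a ha s hs
    fin_cases i
    · exact hs₀ a (hA₁ (hA₂ ha)) s (hT₁ (hT₂ hs))
    · exact hs₁ a (hA₂ ha) s (hT₂ hs)
    · exact hs₂ a ha s hs

/-- number of points needed in an octant -/
def kk (g : Fin 3 → Bool) : ℕ :=
  match (g 0).toNat + (g 1).toNat + (g 2).toNat with
  | 0 => 3
  | 1 => 5
  | 2 => 21
  | _ => 88

lemma kk_pos (g : Fin 3 → Bool) : 0 < kk g := by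
  unfold kk; split <;> omega

/-- enlarged type sets -/
def big (g : Bool) (X : Ty) : Finset Ty := if g then Finset.univ else {X}

/-- chain terms -/
def chains (T : Fin 3 → Finset Ty) : Finset (Fin 3 → Ty) :=
  (Fintype.piFinset T).filter (fun t => ¬ Function.Injective t)

/-- hard terms -/
def hards (T : Fin 3 → Finset Ty) : Finset (Fin 3 → Ty) :=
  (Fintype.piFinset T).filter (fun t => Function.Injective t)

/-- possible parameters -/
def params (n : ℕ) : List (ℕ × ℕ × ℕ) :=
  match n with
  | 3 => [(0, 1, 3), (1, 0, 1)]
  | 5 => [(2, 1, 3), (3, 0, 1)]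
  | 21 => [(7, 2, 14)]
  | _ => [(21, 6, 67)]

lemma params_ok (g : Fin 3 → Bool) : ∀ w ∈ params (kk g), w.1 + w.2.2 ≤ kk g ∧ 0 < w.2.2 ∧
    (1 + w.2.2 + w.2.2.choose 2) ^ w.2.1 < 2 ^ w.2.2 := by
  unfold kk
  split <;> simp [params] <;> norm_num [Nat.choose]

lemma comb_decide : ∀ a b c : Bool, ∀ x y z : Ty,
    ∃ w ∈ params (kk ![a, b, c]),
      (chains ![big a x, big b y, big c z]).card ≤ w.1 ∧
      (hards ![big a x, big b y, big c z]).card ≤ w.2.1 := by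
  decide +kernel

lemma comb (T : Fin 3 → Finset Ty) (g : Fin 3 → Bool) (h : ∀ i, g i = false → (T i).card ≤ 1) :
    ∃ w ∈ params (kk g), (chains T).card ≤ w.1 ∧ (hards T).card ≤ w.2.1 := by
  have hX : ∀ i, ∃ X, T i ⊆ big (g i) X := by
    intro i
    cases hg : g i with
    | true => exact ⟨.P, by simp [big]⟩
    | false =>
      haveI : Nonempty Ty := ⟨.P⟩
      obtain ⟨X, hX⟩ := Finset.card_le_one_iff_subset_singleton.1 (h i hg)
      exact ⟨X, by simpa [big] using hX⟩
  choose X hX using hX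
  obtain ⟨w, hw, h1, h2⟩ := comb_decide (g 0) (g 1) (g 2) (X 0) (X 1) (X 2)
  have hsub : Fintype.piFinset T ⊆
      Fintype.piFinset ![big (g 0) (X 0), big (g 1) (X 1), big (g 2) (X 2)] := by
    apply Fintype.piFinset_subset
    intro i
    fin_cases i
    · exact hX 0
    · exact hX 1
    · exact hX 2
  exact ⟨w, hw, (Finset.card_le_card (Finset.filter_subset_filter _ hsub)).trans h1,
    (Finset.card_le_card (Finset.filter_subset_filter _ hsub)).trans h2⟩

lemma kk_sum (f : Fin 3 → Bool) (k : Bool → Bool → Bool → ℕ)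
    (hk : k = fun a b c => kk ![a == f 0, b == f 1, c == f 2]) :
    (k true true true + k true true false + (k true false true + k true false false)) +
      (k false true true + k false true false + (k false false true + k false false false))
        ≤ 172 := by
  subst hk
  rcases f 0 <;> rcases f 1 <;> rcases f 2 <;> decide

lemma no_shatter (P Q R S : Set (Fin 3 → ℝ)) (hP : P.Finite) (hQ : Q.Finite) (hR : R.Finite)
    (hS : S.Finite)
    (hdistinct : ∀ x ∈ P ∪ Q ∪ R ∪ S, ∀ y ∈ P ∪ Q ∪ R ∪ S, x ≠ y → ∀ i, x i ≠ y i)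
    (c₁ c₂ c₃ : Fin 3 → CoordRel) (A : Finset (Fin 3 → ℝ)) (hA : ↑A ⊆ P) (hcard : 172 ≤ A.card) :
    ¬ RSh (fun p s => ∃ q ∈ Q, ∃ r ∈ R, ∀ i, (c₁ i).holds (p i) (q i) ∧
      (c₂ i).holds (q i) (r i) ∧ (c₃ i).holds (r i) (s i)) S A := by
  classical
  intro hSh
  have hf : ∀ i, ∃ f : Bool, (tset (c₁ i) (c₂ i) (c₃ i) (!f)).card ≤ 1 :=
    fun i => tset_small _ _ _
  choose f hf using hf
  let U : Finset (Fin 3 → ℝ) := (hQ.toFinset ∪ hR.toFinset) ∪ hS.toFinset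
  let E : Finset ℝ := U.biUnion (fun x => Finset.univ.image x)
  have hE : ∀ x, x ∈ Q ∨ x ∈ R ∨ x ∈ S → ∀ i, x i ∈ E := by
    intro x hx i
    refine Finset.mem_biUnion.2 ⟨x, ?_, Finset.mem_image_of_mem _ (Finset.mem_univ i)⟩
    simp only [U, Finset.mem_union, Set.Finite.mem_toFinset]
    tauto
  obtain ⟨o, μ, A', T', hμ, hA', hSh', hsep⟩ := cut_three _ S A
    (by
      intro i x hx y hy hxy
      by_contra hne
      exact hdistinct x (by simp [hA hx]) y (by simp [hA hy]) hne i hxy)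
    E (fun i s hs => hE s (by tauto) i) (fun a b c => kk ![a == f 0, b == f 1, c == f 2])
    (fun _ _ _ => kk_pos _) ((kk_sum f _ rfl).trans hcard) hSh
  let T : Fin 3 → Finset Ty := fun i => tset (c₁ i) (c₂ i) (c₃ i) (o i)
  obtain ⟨⟨c, h, m⟩, hw, hc, hh⟩ := comb T ![o 0 == f 0, o 1 == f 1, o 2 == f 2] (by
    have key : ∀ i, (o i == f i) = false → (T i).card ≤ 1 := by
      intro i hi
      have : o i = !(f i) := by
        revert hi; cases o i <;> cases f i <;> simp
      simp only [T, this]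
      exact hf i
    intro i
    fin_cases i
    · exact key 0
    · exact key 1
    · exact key 2)
  obtain ⟨hle, hm, hpow⟩ := params_ok _ _ hw
  refine union_bound _ T' A' (chains T) (hards T)
    (fun t => HT c₁ c₂ c₃
      {q ∈ Q | ∀ i, Dq (c₁ i) (c₂ i) (c₃ i) (o i) (μ i) (t i) (q i)}
      {r ∈ R | ∀ i, Dr (c₁ i) (c₂ i) (c₃ i) (o i) (μ i) (t i) (r i)} t) ?_ ?_ ?_ c h m hc hh hm
      hpow (hle.trans hA') hSh'
  · intro a ha s hs
    have hcs : ∀ q ∈ Q, ∀ r ∈ R, ∀ i, _ := fun q hq r hr i =>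
      coord_split (c₁ i) (c₂ i) (c₃ i) (o i) (a i) (q i) (r i) (s i) (μ i)
        (fun h => hμ i (h ▸ hE q (by tauto) i)) (fun h => hμ i (h ▸ hE r (by tauto) i))
        (hsep i a ha s hs)
    constructor
    · rintro ⟨q, hq, r, hr, hqr⟩
      have h1 := fun i => (hcs q hq r hr i).1 (hqr i)
      choose t ht hD hcon using h1
      refine ⟨t, ?_, q, ⟨hq, fun i => (hD i).1⟩, r, ⟨hr, fun i => (hD i).2⟩, hcon⟩
      have hmem : t ∈ Fintype.piFinset T := Fintype.mem_piFinset.2 ht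
      by_cases hi : Function.Injective t
      · exact Or.inr (Finset.mem_filter.2 ⟨hmem, hi⟩)
      · exact Or.inl (Finset.mem_filter.2 ⟨hmem, hi⟩)
    · rintro ⟨t, ht, q, ⟨hq, hDq⟩, r, ⟨hr, hDr⟩, hcon⟩
      have hmem : t ∈ Fintype.piFinset T := by
        rcases ht with ht | ht <;> exact (Finset.mem_filter.1 ht).1
      exact ⟨q, hq, r, hr, fun i => (hcs q hq r hr i).2
        ⟨t i, Fintype.mem_piFinset.1 hmem i, ⟨hDq i, hDr i⟩, hcon i⟩⟩
  · intro t ht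
    exact HT_chain _ _ _ _ _ _ (Finset.mem_filter.1 ht).2
  · intro t ht
    exact HT_mono _ _ _ _ _ _ (Finset.mem_filter.1 ht).2

theorem stmt16 (P Q R S : Set (Fin 3 → ℝ))
    (hP : P.Finite) (hQ : Q.Finite) (hR : R.Finite) (hS : S.Finite)
    (hdistinct : ∀ x ∈ P ∪ Q ∪ R ∪ S, ∀ y ∈ P ∪ Q ∪ R ∪ S, x ≠ y → ∀ i, x i ≠ y i)
    (d₁ d₂ d₃ : (Fin 3 → ℝ) → (Fin 3 → ℝ) → Prop)
    (h₁ : IsGenDom d₁) (h₂ : IsGenDom d₂) (h₃ : IsGenDom d₃) :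
    ((fun s => N3 P Q R d₁ d₂ d₃ s) '' S).ncard ≤ (P.ncard + 1) ^ 171 := by
  classical
  obtain ⟨c₁, h₁⟩ := h₁
  obtain ⟨c₂, h₂⟩ := h₂
  obtain ⟨c₃, h₃⟩ := h₃
  let M : (Fin 3 → ℝ) → (Fin 3 → ℝ) → Prop := fun p s => ∃ q ∈ Q, ∃ r ∈ R,
    ∀ i, (c₁ i).holds (p i) (q i) ∧ (c₂ i).holds (q i) (r i) ∧ (c₃ i).holds (r i) (s i)
  let 𝒜 : Finset (Finset (Fin 3 → ℝ)) :=
    hS.toFinset.image (fun s => hP.toFinset.filter (fun p => M p s))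
  have hN : ∀ s, N3 P Q R d₁ d₂ d₃ s = ↑(hP.toFinset.filter (fun p => M p s)) := by
    intro s
    ext p
    simp only [N3, M, h₁, h₂, h₃, forall_and, Finset.coe_filter, Set.Finite.mem_toFinset]
  have himg : ((fun s => N3 P Q R d₁ d₂ d₃ s) '' S) = (fun B : Finset (Fin 3 → ℝ) => (B : Set _)) '' (𝒜 : Set (Finset (Fin 3 → ℝ))) := by
    ext B
    simp only [hN, 𝒜, Finset.coe_image, Set.Finite.coe_toFinset, Set.image_image]
  rw [himg]
  refine (Set.ncard_image_le (Finset.finite_toSet 𝒜)).trans ?_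
  rw [Set.ncard_coe_finset, Set.ncard_eq_toFinset_card P hP]
  refine (sauer_aux hP.toFinset 𝒜 171 ?_ ?_).trans (sum_choose_le _ _)
  · intro B hB
    obtain ⟨s, -, rfl⟩ := Finset.mem_image.1 hB
    exact Finset.filter_subset _ _
  · intro C hC hcard hSh
    have hCP : (C : Set (Fin 3 → ℝ)) ⊆ P := fun x hx => by simpa using hC hx
    refine no_shatter P Q R S hP hQ hR hS hdistinct c₁ c₂ c₃ C hCP (by omega) ?_
    intro B hB
    obtain ⟨u, hu, hu'⟩ := hSh hB
    obtain ⟨s, hs, rfl⟩ := Finset.mem_image.1 hu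
    refine ⟨s, by simpa using hs, fun a ha => ?_⟩
    rw [← hu']
    have haP : a ∈ P := hCP ha
    simp [ha, haP, M]
end

section
/- There exists a positive integer k (an absolute constant) such that the following holds. Let P, Q, R, S ⊆ ℝ³ be finite sets such that for every two distinct points x, y of P ∪ Q ∪ R ∪ S and every coordinate i ∈ {1,2,3}, xᵢ − yᵢ ∉ {−1, 0, 1}. For each s ∈ S define N³[s] = {p ∈ P : ∃ q ∈ Q and r ∈ R with □(p) ∩ □(q) ≠ ∅, □(q) ∩ □(r) ≠ ∅, and □(r) ∩ □(s) ≠ ∅}. Then the number of distinct sets in {N³[s] : s ∈ S} is at most (|P| + 1)^k. In particular, the VC-dimension of the set system (P, {N³[s] : s ∈ S}) is bounded by an absolute constant independent of P, Q, R, S. -/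
/-- `N³[s] = {p ∈ P : ∃ q ∈ Q, r ∈ R with □(p) ∩ □(q) ≠ ∅, □(q) ∩ □(r) ≠ ∅,
and □(r) ∩ □(s) ≠ ∅}`. -/
def N3cube (P Q R : Set (Fin 3 → ℝ)) (s : Fin 3 → ℝ) : Set (Fin 3 → ℝ) :=
  {p ∈ P | ∃ q ∈ Q, ∃ r ∈ R,
    (cube p ∩ cube q).Nonempty ∧ (cube q ∩ cube r).Nonempty ∧ (cube r ∩ cube s).Nonempty}

def cadj (x y : Fin 3 → ℝ) : Prop := ∀ i, |x i - y i| ≤ 1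

lemma cube_inter_iff (p q : Fin 3 → ℝ) : (cube p ∩ cube q).Nonempty ↔ cadj p q := by
  constructor
  · rintro ⟨x, hp, hq⟩ i
    have h1 := abs_le.mp (hp i)
    have h2 := abs_le.mp (hq i)
    rw [abs_le]; constructor <;> linarith [h1.1, h1.2, h2.1, h2.2]
  · intro h
    refine ⟨fun i => (p i + q i) / 2, fun i => ?_, fun i => ?_⟩ <;>
    · have h1 := abs_le.mp (h i)
      rw [abs_le]; constructor <;> linarith [h1.1, h1.2]

lemma abs_floor_iff (x y : ℝ) : |x - y| ≤ 1 ↔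
    (|⌊y⌋ - ⌊x⌋| ≤ 1 ∧ ((⌊y⌋ - ⌊x⌋ : ℤ) : ℝ) * (Int.fract y - Int.fract x) ≤ 0) := by
  have hx := Int.floor_add_fract x
  have hy := Int.floor_add_fract y
  have hx0 := Int.fract_nonneg x
  have hy0 := Int.fract_nonneg y
  have hx1 := Int.fract_lt_one x
  have hy1 := Int.fract_lt_one y
  generalize Int.fract x = u at *
  generalize Int.fract y = v at *
  obtain ⟨d, hd⟩ : ∃ d : ℤ, ⌊y⌋ = ⌊x⌋ + d := ⟨⌊y⌋ - ⌊x⌋, by ring⟩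
  rw [hd] at hy ⊢
  generalize ⌊x⌋ = m at *
  have e : m + d - m = d := by ring
  rw [e, ← hx, ← hy]
  push_cast
  have e2 : (m : ℝ) + u - (m + d + v) = u - v - d := by ring
  rw [e2]
  rw [abs_le, abs_le]
  constructor
  · rintro ⟨h1, h2⟩
    have a1 : (d : ℝ) < 2 := by linarith
    have a2 : (-2 : ℝ) < d := by linarith
    have b1 : d < 2 := by exact_mod_cast a1
    have b2 : -2 < d := by exact_mod_cast a2
    refine ⟨⟨by omega, by omega⟩, ?_⟩
    have : d = -1 ∨ d = 0 ∨ d = 1 := by omega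
    rcases this with rfl | rfl | rfl <;> push_cast at * <;> linarith
  · rintro ⟨⟨h1, h2⟩, h3⟩
    have : d = -1 ∨ d = 0 ∨ d = 1 := by omega
    rcases this with rfl | rfl | rfl <;> push_cast at * <;> constructor <;> linarith

open Classical in
noncomputable def crank (P : Finset (Fin 3 → ℝ)) (i : Fin 3) (x : ℝ) : ℕ :=
  (P.filter fun p => Int.fract (p i) < Int.fract x).card +
  (P.filter fun p => Int.fract (p i) ≤ Int.fract x).card

lemma crank_mono (P : Finset (Fin 3 → ℝ)) (i : Fin 3) {x y : ℝ}
    (h : Int.fract x ≤ Int.fract y) : crank P i x ≤ crank P i y := by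
  unfold crank
  apply Nat.add_le_add <;> apply Finset.card_le_card <;> intro p hp <;>
    simp only [Finset.mem_filter] at hp ⊢ <;> exact ⟨hp.1, by linarith [hp.2]⟩

lemma crank_lt_left (P : Finset (Fin 3 → ℝ)) (i : Fin 3) {p : Fin 3 → ℝ} {y : ℝ} (hp : p ∈ P)
    (h : Int.fract (p i) < Int.fract y) : crank P i (p i) < crank P i y := by
  unfold crank
  apply Nat.add_lt_add_of_lt_of_le
  · apply Finset.card_lt_card
    rw [Finset.ssubset_iff_of_subset]
    · exact ⟨p, by simp [hp, h], by simp⟩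
    · intro p hp
      simp only [Finset.mem_filter] at hp ⊢
      exact ⟨hp.1, by linarith [hp.2]⟩
  · apply Finset.card_le_card
    intro p hp
    simp only [Finset.mem_filter] at hp ⊢
    exact ⟨hp.1, by linarith [hp.2]⟩

lemma crank_lt_right (P : Finset (Fin 3 → ℝ)) (i : Fin 3) {p : Fin 3 → ℝ} {y : ℝ} (hp : p ∈ P)
    (h : Int.fract y < Int.fract (p i)) : crank P i y < crank P i (p i) := by
  unfold crank
  apply Nat.add_lt_add_of_le_of_lt
  · apply Finset.card_le_card
    intro p hp
    simp only [Finset.mem_filter] at hp ⊢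
    exact ⟨hp.1, by linarith [hp.2]⟩
  · apply Finset.card_lt_card
    rw [Finset.ssubset_iff_of_subset]
    · exact ⟨p, by simp [hp], by simp [h]⟩
    · intro p hp
      simp only [Finset.mem_filter] at hp ⊢
      exact ⟨hp.1, by linarith [hp.2]⟩

lemma crank_eq (P : Finset (Fin 3 → ℝ)) (i : Fin 3) {p : Fin 3 → ℝ} {y : ℝ} (hp : p ∈ P)
    (h : crank P i (p i) = crank P i y) : Int.fract (p i) = Int.fract y := by
  rcases lt_trichotomy (Int.fract (p i)) (Int.fract y) with h1 | h1 | h1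
  · have := crank_lt_left P i hp h1; omega
  · exact h1
  · have := crank_lt_right P i hp h1; omega

lemma crank_le (P : Finset (Fin 3 → ℝ)) (i : Fin 3) (x : ℝ) : crank P i x ≤ 2 * P.card := by
  unfold crank
  have h1 := Finset.card_filter_le P (fun p => Int.fract (p i) < Int.fract x)
  have h2 := Finset.card_filter_le P (fun p => Int.fract (p i) ≤ Int.fract x)
  classical
  convert (Nat.add_le_add h1 h2).trans (by omega : P.card + P.card ≤ 2 * P.card) using 3

/-- Signed interleaving of two pairs of reals. -/
def Fwd (e x y x' y' : ℝ) : Prop := e * y ≤ e * x ∧ e * x < e * y' ∧ e * y' ≤ e * x'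

lemma Fwd.cases {e x y x' y' : ℝ} (h : Fwd e x y x' y') :
    (0 < e ∧ y ≤ x ∧ x < y' ∧ y' ≤ x') ∨ (e < 0 ∧ x ≤ y ∧ y' < x ∧ x' ≤ y') := by
  obtain ⟨h1, h2, h3⟩ := h
  rcases lt_trichotomy e 0 with he | he | he
  · right
    refine ⟨he, ?_, ?_, ?_⟩ <;> nlinarith
  · subst he; simp at h2
  · left
    refine ⟨he, ?_, ?_, ?_⟩ <;> nlinarith

lemma pigeon (zq zr : Fin 3 → Prop) (i1 j1 i2 j2 i3 j3 : Fin 3)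
    (h1 : ¬ zq i1) (h1' : ¬ zq j1) (n1 : i1 ≠ j1)
    (h2 : zq i2 ↔ zr i2) (h2' : zq j2 ↔ zr j2) (n2 : i2 ≠ j2)
    (h3 : zr i3) (h3' : zr j3) (n3 : i3 ≠ j3) :
    ∃ a b, (¬ zr a ∧ (∀ i, ¬ zr i → i = a) ∧ zq b ∧ (∀ i, zq i → i = b)) ∧
      (a = i1 ∨ a = j1) ∧ ((a = i2 ∧ b = j2) ∨ (a = j2 ∧ b = i2)) ∧ (b = i3 ∨ b = j3) := by
  by_cases hi : zq i2 <;> by_cases hj : zq j2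
  · exfalso
    have : i1 ≠ i2 := by rintro rfl; tauto
    have : i1 ≠ j2 := by rintro rfl; tauto
    have : j1 ≠ i2 := by rintro rfl; tauto
    have : j1 ≠ j2 := by rintro rfl; tauto
    omega
  · refine ⟨j2, i2, ⟨by tauto, fun i hi' => ?_, hi, fun i hi' => ?_⟩, ?_, by simp, ?_⟩
    · have : i ≠ i3 := by rintro rfl; tauto
      have : i ≠ j3 := by rintro rfl; tauto
      have : j2 ≠ i3 := by rintro rfl; tauto
      have : j2 ≠ j3 := by rintro rfl; tauto
      omega
    · have : i ≠ i1 := by rintro rfl; tauto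
      have : i ≠ j1 := by rintro rfl; tauto
      have : i2 ≠ i1 := by rintro rfl; tauto
      have : i2 ≠ j1 := by rintro rfl; tauto
      omega
    · have : i2 ≠ i1 := by rintro rfl; tauto
      have : i2 ≠ j1 := by rintro rfl; tauto
      omega
    · have : j2 ≠ i3 := by rintro rfl; tauto
      have : j2 ≠ j3 := by rintro rfl; tauto
      omega
  · refine ⟨i2, j2, ⟨by tauto, fun i hi' => ?_, hj, fun i hi' => ?_⟩, ?_, by simp, ?_⟩
    · have : i ≠ i3 := by rintro rfl; tauto
      have : i ≠ j3 := by rintro rfl; tauto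
      have : i2 ≠ i3 := by rintro rfl; tauto
      have : i2 ≠ j3 := by rintro rfl; tauto
      omega
    · have : i ≠ i1 := by rintro rfl; tauto
      have : i ≠ j1 := by rintro rfl; tauto
      have : j2 ≠ i1 := by rintro rfl; tauto
      have : j2 ≠ j1 := by rintro rfl; tauto
      omega
    · have : j2 ≠ i1 := by rintro rfl; tauto
      have : j2 ≠ j1 := by rintro rfl; tauto
      omega
    · have : i2 ≠ i3 := by rintro rfl; tauto
      have : i2 ≠ j3 := by rintro rfl; tauto
      omega
  · exfalso
    have : i3 ≠ i2 := by rintro rfl; tauto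
    have : i3 ≠ j2 := by rintro rfl; tauto
    have : j3 ≠ i2 := by rintro rfl; tauto
    have : j3 ≠ j2 := by rintro rfl; tauto
    omega

abbrev COff : Type := ↥(Finset.Icc (-3 : ℤ) 3)
abbrev CTy : Type := Fin 3 → COff × COff × COff × Bool × Bool
abbrev CKey : Type := (Fin 3 → ℤ) × (Fin 3 → ℕ)

noncomputable def ckey (P : Finset (Fin 3 → ℝ)) (s : Fin 3 → ℝ) : CKey :=
  (fun i => ⌊s i⌋, fun i => crank P i (s i))

def HasTy (P : Finset (Fin 3 → ℝ)) (κ : CKey) (τ : CTy) (p q r : Fin 3 → ℝ) : Prop :=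
  ∀ i, ⌊p i⌋ = κ.1 i + ((τ i).1 : ℤ) ∧ ⌊q i⌋ = κ.1 i + ((τ i).2.1 : ℤ) ∧
    ⌊r i⌋ = κ.1 i + ((τ i).2.2.1 : ℤ) ∧
    (crank P i (q i) = κ.2 i ↔ (τ i).2.2.2.1 = true) ∧
    (crank P i (r i) = κ.2 i ↔ (τ i).2.2.2.2 = true)

def CX (P : Finset (Fin 3 → ℝ)) (Q R : Set (Fin 3 → ℝ)) (κ : CKey) (τ : CTy)
    (p s : Fin 3 → ℝ) : Prop :=
  ∃ q ∈ Q, ∃ r ∈ R, HasTy P κ τ p q r ∧ cadj p q ∧ cadj q r ∧ cadj r s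

/-- One level of a crown. -/
lemma level {x x' y y' : Fin 3 → ℝ} (hx : ∀ i, ⌊x i⌋ = ⌊x' i⌋) (hy : ∀ i, ⌊y i⌋ = ⌊y' i⌋)
    (h1 : cadj x y) (h2 : cadj x' y') (h3 : ¬ cadj x y') :
    ∃ i, Fwd ((⌊y i⌋ - ⌊x i⌋ : ℤ) : ℝ) (Int.fract (x i)) (Int.fract (y i))
      (Int.fract (x' i)) (Int.fract (y' i)) := by
  unfold cadj at h3
  push Not at h3
  obtain ⟨i, hi⟩ := h3
  have a1 := (abs_floor_iff _ _).mp (h1 i)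
  have a2 := (abs_floor_iff _ _).mp (h2 i)
  have a3 := mt (abs_floor_iff _ _).mpr (not_le.mpr hi)
  rw [← hx, ← hy] at a2
  rw [← hy] at a3
  refine ⟨i, ?_, ?_, ?_⟩
  · linarith [a1.2]
  · by_contra hc
    exact a3 ⟨a1.1, by linarith⟩
  · linarith [a2.2]

lemma Fwd.ne {e : Fin 3 → ℝ} {x y x' y' : Fin 3 → ℝ} {i j : Fin 3}
    (h : Fwd (e i) (x i) (y i) (x' i) (y' i)) (h' : Fwd (e j) (x' j) (y' j) (x j) (y j)) :
    i ≠ j := by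
  rintro rfl
  obtain ⟨a, b, c⟩ := h
  obtain ⟨a', b', c'⟩ := h'
  linarith

lemma between_key {P : Finset (Fin 3 → ℝ)} {i : Fin 3} {h : ℕ} {e x y x' y' : ℝ}
    (hf : Fwd e (Int.fract x) (Int.fract y) (Int.fract x') (Int.fract y')) :
    (crank P i y = h → crank P i y' = h → crank P i x = h) ∧
    (crank P i x = h → crank P i x' = h → crank P i y' = h) := by
  rcases hf.cases with ⟨_, h1, h2, h3⟩ | ⟨_, h1, h2, h3⟩
  · have k1 := crank_mono P i h1
    have k2 := crank_mono P i h2.le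
    have k3 := crank_mono P i h3
    constructor <;> intros <;> omega
  · have k1 := crank_mono P i h1
    have k2 := crank_mono P i h2.le
    have k3 := crank_mono P i h3
    constructor <;> intros <;> omega

lemma not_zone_p {P : Finset (Fin 3 → ℝ)} {i : Fin 3} {h : ℕ} {e y x' y' : ℝ} {p : Fin 3 → ℝ}
    (hp : p ∈ P)
    (hf : Fwd e (Int.fract (p i)) (Int.fract y) (Int.fract x') (Int.fract y'))
    (h1 : crank P i y = h) (h2 : crank P i y' = h) : False := by
  have h3 := (between_key (P := P) (i := i) (h := h) hf).1 h1 h2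
  have e1 := crank_eq P i hp (h3.trans h2.symm)
  have := hf.2.1
  rw [e1] at this
  exact lt_irrefl _ this

def HAB (τ : CTy) (a b : Fin 3) : Prop :=
  ¬ ((τ a).2.2.2.2 = true) ∧ (∀ i, ¬ ((τ i).2.2.2.2 = true) → i = a) ∧
    (τ b).2.2.2.1 = true ∧ (∀ i, (τ i).2.2.2.1 = true → i = b)

lemma HAB.unique {τ : CTy} {a b a' b' : Fin 3} (h : HAB τ a b) (h' : HAB τ a' b') :
    a' = a ∧ b' = b := ⟨h.2.1 _ h'.1, h.2.2.2 _ h'.2.2.1⟩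

def cdel (τ : CTy) (i : Fin 3) : ℝ := (((τ i).2.2.1 : ℤ) - ((τ i).2.1 : ℤ) : ℤ)

/-- the sign relation across one level at one coordinate -/
lemma Fwd.signs {e x y x' y' : ℝ} (h : Fwd e x y x' y') :
    0 < e * (x' - x) ∧ 0 < e * (y' - y) := by
  obtain ⟨h1, h2, h3⟩ := h
  constructor <;> linarith

lemma mul_pos_of_signs {e u v : ℝ} (h1 : 0 < e * u) (h2 : 0 < e * v) : 0 < u * v := by
  have : 0 < (e * u) * (e * v) := mul_pos h1 h2
  have h3 : (e * u) * (e * v) = e ^ 2 * (u * v) := by ring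
  rw [h3] at this
  by_contra hc
  push Not at hc
  nlinarith [sq_nonneg e]

lemma crown {P : Finset (Fin 3 → ℝ)} {Q R : Set (Fin 3 → ℝ)} {κ : CKey} {τ : CTy}
    {p p' s s' : Fin 3 → ℝ} (hp : p ∈ P) (hp' : p' ∈ P) (hs : ckey P s = κ) (hs' : ckey P s' = κ)
    (h1 : CX P Q R κ τ p s) (h2 : ¬ CX P Q R κ τ p s') (h3 : CX P Q R κ τ p' s')
    (h4 : ¬ CX P Q R κ τ p' s) :
    ∃ a b, HAB τ a b ∧ cdel τ a * cdel τ b * (Int.fract (p' a) - Int.fract (p a)) *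
      (Int.fract (s' b) - Int.fract (s b)) < 0 := by
  obtain ⟨q, hq, r, hr, ty, pq, qr, rs⟩ := h1
  obtain ⟨q', hq', r', hr', ty', pq', qr', rs'⟩ := h3
  have tpq' : HasTy P κ τ p q' r' := fun i =>
    ⟨(ty i).1, (ty' i).2.1, (ty' i).2.2.1, (ty' i).2.2.2.1, (ty' i).2.2.2.2⟩
  have tpr' : HasTy P κ τ p q r' := fun i =>
    ⟨(ty i).1, (ty i).2.1, (ty' i).2.2.1, (ty i).2.2.2.1, (ty' i).2.2.2.2⟩
  have tpq : HasTy P κ τ p' q r := fun i =>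
    ⟨(ty' i).1, (ty i).2.1, (ty i).2.2.1, (ty i).2.2.2.1, (ty i).2.2.2.2⟩
  have tpr : HasTy P κ τ p' q' r := fun i =>
    ⟨(ty' i).1, (ty' i).2.1, (ty i).2.2.1, (ty' i).2.2.2.1, (ty i).2.2.2.2⟩
  have n1 : ¬ cadj p q' := fun h => h2 ⟨q', hq', r', hr', tpq', h, qr', rs'⟩
  have n2 : ¬ cadj q r' := fun h => h2 ⟨q, hq, r', hr', tpr', pq, h, rs'⟩
  have n3 : ¬ cadj r s' := fun h => h2 ⟨q, hq, r, hr, ty, pq, qr, h⟩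
  have m1 : ¬ cadj p' q := fun h => h4 ⟨q, hq, r, hr, tpq, h, qr, rs⟩
  have m2 : ¬ cadj q' r := fun h => h4 ⟨q', hq', r, hr, tpr, pq', h, rs⟩
  have m3 : ¬ cadj r' s := fun h => h4 ⟨q', hq', r', hr', ty', pq', qr', h⟩
  have fp : ∀ i, ⌊p i⌋ = ⌊p' i⌋ := fun i => (ty i).1.trans (ty' i).1.symm
  have fq : ∀ i, ⌊q i⌋ = ⌊q' i⌋ := fun i => (ty i).2.1.trans (ty' i).2.1.symm
  have fr : ∀ i, ⌊r i⌋ = ⌊r' i⌋ := fun i => (ty i).2.2.1.trans (ty' i).2.2.1.symm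
  have hss : ckey P s = ckey P s' := hs.trans hs'.symm
  have fs : ∀ i, ⌊s i⌋ = ⌊s' i⌋ := fun i => congrFun (congrArg Prod.fst hss) i
  have ks : ∀ i, crank P i (s i) = κ.2 i := fun i => congrFun (congrArg Prod.snd hs) i
  have ks' : ∀ i, crank P i (s' i) = κ.2 i := fun i => congrFun (congrArg Prod.snd hs') i
  obtain ⟨i1, I1⟩ := level fp fq pq pq' n1
  obtain ⟨j1, J1⟩ := level (fun i => (fp i).symm) (fun i => (fq i).symm) pq' pq m1
  obtain ⟨i2, I2⟩ := level fq fr qr qr' n2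
  obtain ⟨j2, J2⟩ := level (fun i => (fq i).symm) (fun i => (fr i).symm) qr' qr m2
  obtain ⟨i3, I3⟩ := level fr fs rs rs' n3
  obtain ⟨j3, J3⟩ := level (fun i => (fr i).symm) (fun i => (fs i).symm) rs' rs m3
  rw [← fp, ← fq] at J1
  rw [← fq, ← fr] at J2
  rw [← fr, ← fs] at J3
  have zq := fun i => (ty i).2.2.2.1
  have zr := fun i => (ty i).2.2.2.2
  have zq' := fun i => (ty' i).2.2.2.1
  have zr' := fun i => (ty' i).2.2.2.2
  have b2 := between_key (P := P) (i := i2) (h := κ.2 i2) I2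
  have c2 := between_key (P := P) (i := j2) (h := κ.2 j2) J2
  have b3 := (between_key (P := P) (i := i3) (h := κ.2 i3) I3).1 (ks _) (ks' _)
  have c3 := (between_key (P := P) (i := j3) (h := κ.2 j3) J3).1 (ks' _) (ks _)
  obtain ⟨a, b, hab, ha, hab2, hb⟩ := pigeon (fun i => (τ i).2.2.2.1 = true)
    (fun i => (τ i).2.2.2.2 = true) i1 j1 i2 j2 i3 j3
    (fun h => not_zone_p hp I1 ((zq _).mpr h) ((zq' _).mpr h))
    (fun h => not_zone_p hp' J1 ((zq' _).mpr h) ((zq _).mpr h))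
    (Fwd.ne (e := fun i => ((⌊q i⌋ - ⌊p i⌋ : ℤ) : ℝ)) (x := fun i => Int.fract (p i))
      (y := fun i => Int.fract (q i)) (x' := fun i => Int.fract (p' i))
      (y' := fun i => Int.fract (q' i)) I1 J1)
    ⟨fun h => (zr' _).mp (b2.2 ((zq _).mpr h) ((zq' _).mpr h)),
      fun h => (zq _).mp (b2.1 ((zr _).mpr h) ((zr' _).mpr h))⟩
    ⟨fun h => (zr _).mp (c2.2 ((zq' _).mpr h) ((zq _).mpr h)),
      fun h => (zq' _).mp (c2.1 ((zr' _).mpr h) ((zr _).mpr h))⟩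
    (Fwd.ne (e := fun i => ((⌊r i⌋ - ⌊q i⌋ : ℤ) : ℝ)) (x := fun i => Int.fract (q i))
      (y := fun i => Int.fract (r i)) (x' := fun i => Int.fract (q' i))
      (y' := fun i => Int.fract (r' i)) I2 J2)
    ((zr _).mp b3) ((zr' _).mp c3)
    (Fwd.ne (e := fun i => ((⌊s i⌋ - ⌊r i⌋ : ℤ) : ℝ)) (x := fun i => Int.fract (r i))
      (y := fun i => Int.fract (s i)) (x' := fun i => Int.fract (r' i))
      (y' := fun i => Int.fract (s' i)) I3 J3)
  refine ⟨a, b, hab, ?_⟩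
  have A : 0 < (Int.fract (p' a) - Int.fract (p a)) * (Int.fract (q' a) - Int.fract (q a)) := by
    rcases ha with rfl | rfl
    · exact mul_pos_of_signs I1.signs.1 I1.signs.2
    · have := mul_pos_of_signs J1.signs.1 J1.signs.2
      linarith
  have B : 0 < (Int.fract (r' b) - Int.fract (r b)) * (Int.fract (s' b) - Int.fract (s b)) := by
    rcases hb with rfl | rfl
    · exact mul_pos_of_signs I3.signs.1 I3.signs.2
    · have := mul_pos_of_signs J3.signs.1 J3.signs.2
      linarith
  have D : ∀ i, ((⌊r i⌋ - ⌊q i⌋ : ℤ) : ℝ) = cdel τ i := by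
    intro i
    unfold cdel
    rw [(ty i).2.1, (ty i).2.2.1]
    push_cast; ring
  rw [D] at I2 J2
  have C : (cdel τ a * (Int.fract (q' a) - Int.fract (q a))) *
      (cdel τ b * (Int.fract (r' b) - Int.fract (r b))) < 0 := by
    rcases hab2 with ⟨rfl, rfl⟩ | ⟨rfl, rfl⟩
    · have x1 := I2.signs.1
      have x2 := J2.signs.2
      exact mul_neg_of_pos_of_neg x1 (by linarith)
    · have x1 := I2.signs.2
      have x2 := J2.signs.1
      exact mul_neg_of_neg_of_pos (by linarith) x1
  have ABC := mul_neg_of_pos_of_neg (mul_pos A B) C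
  by_contra hc
  push Not at hc
  have key : ∀ dp dq dr ds x y : ℝ, 0 ≤ x * y * dp * ds →
      dp * dq * (dr * ds) * (x * dq * (y * dr)) < 0 → False := by
    intro dp dq dr ds x y k1 k2
    have : dp * dq * (dr * ds) * (x * dq * (y * dr)) = (x * y * dp * ds) * (dq * dr) ^ 2 := by ring
    rw [this] at k2
    exact absurd k2 (not_lt.mpr (mul_nonneg k1 (sq_nonneg _)))
  exact key _ _ _ _ _ _ hc ABC

/-- Sauer-type bound for families without shattered triples. -/
lemma card_le_of_vc {α : Type*} [DecidableEq α] (P : Finset α) (F : Finset (Finset α))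
    (hF : ∀ t ∈ F, t ⊆ P) (h3 : ∀ A : Finset α, A ⊆ P → A.card = 3 → ¬ F.Shatters A) :
    F.card ≤ (P.card + 1) ^ 2 := by
  have hsub : F.shatterer ⊆ P.powersetCard 0 ∪ P.powersetCard 1 ∪ P.powersetCard 2 := by
    intro A hA
    rw [Finset.mem_shatterer] at hA
    obtain ⟨t, ht, hAt⟩ := hA.exists_superset
    have hAP := hAt.trans (hF t ht)
    have : A.card < 3 := by
      by_contra hc
      push Not at hc
      obtain ⟨B, hB, hB3⟩ := Finset.exists_subset_card_eq hc
      exact h3 B (hB.trans hAP) hB3 (hA.mono_right hB)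
    simp only [Finset.mem_union, Finset.mem_powersetCard]
    have : A.card = 0 ∨ A.card = 1 ∨ A.card = 2 := by omega
    tauto
  calc F.card ≤ F.shatterer.card := Finset.card_le_card_shatterer F
    _ ≤ _ := Finset.card_le_card hsub
    _ ≤ (P.powersetCard 0).card + (P.powersetCard 1).card + (P.powersetCard 2).card :=
      (Finset.card_union_le _ _).trans (Nat.add_le_add_right (Finset.card_union_le _ _) _)
    _ ≤ _ := by
      simp only [Finset.card_powersetCard, Nat.choose_zero_right, Nat.choose_one_right]
      have := Nat.choose_le_pow P.card 2
      nlinarith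

open Classical in
noncomputable def CFam (P : Finset (Fin 3 → ℝ)) (Q R : Set (Fin 3 → ℝ)) (S : Finset (Fin 3 → ℝ))
    (κ : CKey) (τ : CTy) : Finset (Finset (Fin 3 → ℝ)) :=
  (S.filter fun s => ckey P s = κ).image fun s => P.filter fun p => CX P Q R κ τ p s

open Classical in
lemma CFam_card (P : Finset (Fin 3 → ℝ)) (Q R : Set (Fin 3 → ℝ)) (S : Finset (Fin 3 → ℝ))
    (κ : CKey) (τ : CTy) : (CFam P Q R S κ τ).card ≤ (P.card + 1) ^ 2 := by
  apply card_le_of_vc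
  · intro t ht
    simp only [CFam, Finset.mem_image] at ht
    obtain ⟨s, _, rfl⟩ := ht
    exact Finset.filter_subset _ _
  · intro A hA hA3 hsh
    obtain ⟨x, y, z, hxy, hxz, hyz, rfl⟩ := Finset.card_eq_three.mp hA3
    have hx : x ∈ P := hA (by simp)
    have hy : y ∈ P := hA (by simp)
    have hz : z ∈ P := hA (by simp)
    have get : ∀ B : Finset (Fin 3 → ℝ), B ⊆ {x, y, z} → ∃ s, ckey P s = κ ∧
        ∀ w ∈ ({x, y, z} : Finset (Fin 3 → ℝ)), (CX P Q R κ τ w s ↔ w ∈ B) := by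
      intro B hB
      obtain ⟨u, hu, huB⟩ := hsh hB
      simp only [CFam, Finset.mem_image, Finset.mem_filter] at hu
      obtain ⟨s, ⟨_, hs⟩, rfl⟩ := hu
      refine ⟨s, hs, fun w hw => ?_⟩
      rw [← huB, Finset.mem_inter, Finset.mem_filter]
      exact ⟨fun h => ⟨hw, hA hw, h⟩, fun h => h.2.2⟩
    have med : ∀ u m v, u ∈ ({x, y, z} : Finset (Fin 3 → ℝ)) → m ∈ ({x, y, z} : Finset (Fin 3 → ℝ)) →
        v ∈ ({x, y, z} : Finset (Fin 3 → ℝ)) → u ≠ m → v ≠ m →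
        ∃ a b, HAB τ a b ∧ 0 < (Int.fract (m a) - Int.fract (u a)) *
          (Int.fract (m a) - Int.fract (v a)) := by
      intro u m v hu hm hv hum hvm
      obtain ⟨s, hs, Hs⟩ := get {u, v} (by
        intro w hw
        simp only [Finset.mem_insert, Finset.mem_singleton] at hw
        rcases hw with rfl | rfl <;> assumption)
      obtain ⟨s', hs', Hs'⟩ := get {m} (by simpa using hm)
      have c1 := crown (hA hu) (hA hm) hs hs' ((Hs u hu).mpr (by simp))
        (fun h => hum (by simpa using (Hs' u hu).mp h)) ((Hs' m hm).mpr (by simp))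
        (fun h => by
          have := (Hs m hm).mp h
          simp only [Finset.mem_insert, Finset.mem_singleton] at this
          tauto)
      have c2 := crown (hA hv) (hA hm) hs hs' ((Hs v hv).mpr (by simp))
        (fun h => hvm (by simpa using (Hs' v hv).mp h)) ((Hs' m hm).mpr (by simp))
        (fun h => by
          have := (Hs m hm).mp h
          simp only [Finset.mem_insert, Finset.mem_singleton] at this
          tauto)
      obtain ⟨a, b, hab, L1⟩ := c1
      obtain ⟨a', b', hab', L2⟩ := c2
      obtain ⟨rfl, rfl⟩ := hab.unique hab'
      refine ⟨_, _, hab, ?_⟩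
      apply mul_pos_of_signs (e := - (cdel τ a' * cdel τ b' * (Int.fract (s' b') - Int.fract (s b'))))
      · linarith
      · linarith
    obtain ⟨a, b, hab, M1⟩ := med x y z (by simp) (by simp) (by simp) hxy hyz.symm
    obtain ⟨a', b', hab', M2⟩ := med y x z (by simp) (by simp) (by simp) hxy.symm hxz.symm
    obtain ⟨rfl, rfl⟩ := hab.unique hab'
    obtain ⟨a'', b'', hab'', M3⟩ := med x z y (by simp) (by simp) (by simp) hxz hyz
    obtain ⟨rfl, rfl⟩ := hab.unique hab''
    have := mul_pos (mul_pos M1 M2) M3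
    generalize Int.fract (x a'') = X at this
    generalize Int.fract (y a'') = Y at this
    generalize Int.fract (z a'') = Z at this
    nlinarith [sq_nonneg ((X - Y) * (Y - Z) * (X - Z))]

lemma cadj_floor {x y : Fin 3 → ℝ} (h : cadj x y) (i : Fin 3) : |⌊y i⌋ - ⌊x i⌋| ≤ 1 :=
  ((abs_floor_iff _ _).mp (h i)).1

lemma exists_ty (P : Finset (Fin 3 → ℝ)) {p q r s : Fin 3 → ℝ} (h1 : cadj p q) (h2 : cadj q r)
    (h3 : cadj r s) : ∃ τ, HasTy P (ckey P s) τ p q r := by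
  classical
  have a1 := fun i => abs_le.mp (cadj_floor h1 i)
  have a2 := fun i => abs_le.mp (cadj_floor h2 i)
  have a3 := fun i => abs_le.mp (cadj_floor h3 i)
  refine ⟨fun i => (⟨⌊p i⌋ - ⌊s i⌋, ?_⟩, ⟨⌊q i⌋ - ⌊s i⌋, ?_⟩, ⟨⌊r i⌋ - ⌊s i⌋, ?_⟩,
    decide (crank P i (q i) = crank P i (s i)), decide (crank P i (r i) = crank P i (s i))), ?_⟩
  · rw [Finset.mem_Icc]; have := a1 i; have := a2 i; have := a3 i; omega
  · rw [Finset.mem_Icc]; have := a1 i; have := a2 i; have := a3 i; omega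
  · rw [Finset.mem_Icc]; have := a1 i; have := a2 i; have := a3 i; omega
  · intro i
    simp [ckey]

noncomputable def CKeys (P : Finset (Fin 3 → ℝ)) : Finset CKey :=
  (Fintype.piFinset fun i => P.biUnion fun p => Finset.Icc (⌊p i⌋ - 3) (⌊p i⌋ + 3)) ×ˢ
    (Fintype.piFinset fun _ => Finset.range (2 * P.card + 1))

lemma CKeys_card (P : Finset (Fin 3 → ℝ)) (h : 1 ≤ P.card) :
    (CKeys P).card ≤ (P.card + 1) ^ 18 := by
  unfold CKeys
  rw [Finset.card_product, Fintype.card_piFinset, Fintype.card_piFinset]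
  simp only [Finset.card_range, Finset.prod_const, Finset.card_univ, Fintype.card_fin]
  have h1 : ∀ i : Fin 3, (P.biUnion fun p => Finset.Icc (⌊p i⌋ - 3) (⌊p i⌋ + 3)).card
      ≤ (P.card + 1) ^ 4 := by
    intro i
    refine (Finset.card_biUnion_le_card_mul P _ 7 ?_).trans ?_
    · intro p _
      simp only [Int.card_Icc]
      omega
    · have : 2 ^ 3 ≤ (P.card + 1) ^ 3 := Nat.pow_le_pow_left (by omega) 3
      rw [pow_succ, mul_comm]
      exact Nat.mul_le_mul (by omega) (by omega)
  have h2 : 2 * P.card + 1 ≤ (P.card + 1) ^ 2 := by nlinarith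
  calc _ ≤ (∏ _i : Fin 3, (P.card + 1) ^ 4) * ((P.card + 1) ^ 2) ^ 3 :=
        Nat.mul_le_mul (Finset.prod_le_prod' fun i _ => h1 i) (Nat.pow_le_pow_left h2 3)
    _ = _ := by
      simp only [Finset.prod_const, Finset.card_univ, Fintype.card_fin]
      ring

lemma main_count (T : ℕ) (hT : Fintype.card CTy = T)
    (P S : Finset (Fin 3 → ℝ)) (Q R : Set (Fin 3 → ℝ)) :
    ((fun s => N3cube (P : Set (Fin 3 → ℝ)) Q R s) '' (S : Set (Fin 3 → ℝ))).ncard ≤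
      (P.card + 1) ^ (19 + 2 * T) := by
  classical
  rcases Nat.eq_zero_or_pos P.card with h0 | h0
  · rw [h0]
    have hP : P = ∅ := Finset.card_eq_zero.mp h0
    subst hP
    have : (fun s => N3cube ((∅ : Finset (Fin 3 → ℝ)) : Set (Fin 3 → ℝ)) Q R s) ''
        (S : Set (Fin 3 → ℝ)) ⊆ {∅} := by
      rintro _ ⟨s, _, rfl⟩
      simp [N3cube]
    simpa using (Set.ncard_le_ncard this)
  · let un : (CTy → Finset (Fin 3 → ℝ)) → Set (Fin 3 → ℝ) := fun g => {p | ∃ τ, p ∈ g τ}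
    let big : Finset (Set (Fin 3 → ℝ)) := insert ∅ ((CKeys P).biUnion fun κ =>
      (Fintype.piFinset fun τ => CFam P Q R S κ τ).image un)
    have hsub : (fun s => N3cube (P : Set (Fin 3 → ℝ)) Q R s) '' (S : Set (Fin 3 → ℝ)) ⊆ big := by
      rintro _ ⟨s, hs, rfl⟩
      simp only [big, Finset.coe_insert, Set.mem_insert_iff, Finset.mem_coe, Finset.mem_biUnion,
        Finset.mem_image, Fintype.mem_piFinset]
      rcases Set.eq_empty_or_nonempty (N3cube (P : Set (Fin 3 → ℝ)) Q R s) with he | ⟨p, hp⟩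
      · exact Or.inl he
      · right
        refine ⟨ckey P s, ?_, fun τ => P.filter fun p => CX P Q R (ckey P s) τ p s, ?_, ?_⟩
        · obtain ⟨hpP, q, hq, r, hr, h1, h2, h3⟩ := hp
          rw [cube_inter_iff] at h1 h2 h3
          simp only [CKeys, Finset.mem_product, Fintype.mem_piFinset, Finset.mem_biUnion,
            Finset.mem_Icc, Finset.mem_range]
          refine ⟨fun i => ⟨p, hpP, ?_⟩, fun i => Nat.lt_succ_of_le (crank_le P i _)⟩
          have a1 := abs_le.mp (cadj_floor h1 i)
          have a2 := abs_le.mp (cadj_floor h2 i)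
          have a3 := abs_le.mp (cadj_floor h3 i)
          simp only [ckey]
          omega
        · intro τ
          simp only [CFam, Finset.mem_image, Finset.mem_filter]
          exact ⟨s, ⟨hs, rfl⟩, rfl⟩
        · ext w
          simp only [un, Set.mem_ofPred_eq, Finset.mem_filter, N3cube, cube_inter_iff]
          constructor
          · rintro ⟨τ, hw, q, hq, r, hr, _, h⟩
            exact ⟨hw, q, hq, r, hr, h⟩
          · rintro ⟨hw, q, hq, r, hr, h1, h2, h3⟩
            obtain ⟨τ, hτ⟩ := exists_ty P h1 h2 h3
            exact ⟨τ, hw, q, hq, r, hr, hτ, h1, h2, h3⟩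
    have hcard : big.card ≤ (P.card + 1) ^ 18 * ((P.card + 1) ^ 2) ^ T + 1 := by
      refine (Finset.card_insert_le _ _).trans (Nat.add_le_add_right ?_ 1)
      refine (Finset.card_biUnion_le_card_mul _ _ (((P.card + 1) ^ 2) ^ T) ?_).trans
        (Nat.mul_le_mul_right _ (CKeys_card P h0))
      intro κ _
      refine Finset.card_image_le.trans ?_
      rw [Fintype.card_piFinset]
      refine (Finset.prod_le_prod' fun τ _ => CFam_card P Q R S κ τ).trans ?_
      rw [Finset.prod_const, Finset.card_univ, hT]
    have h1 := Set.ncard_le_ncard hsub big.finite_toSet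
    rw [Set.ncard_coe_finset] at h1
    refine h1.trans (hcard.trans ?_)
    clear hcard h1 hsub hT
    clear big
    rw [← pow_mul, ← pow_add]
    have e1 : 19 + 2 * T = (18 + 2 * T) + 1 := by omega
    have : (P.card + 1) ^ (19 + 2 * T) = (P.card + 1) ^ (18 + 2 * T) * (P.card + 1) := by
      rw [e1, pow_succ]
    rw [this]
    have : 1 ≤ (P.card + 1) ^ (18 + 2 * T) := Nat.one_le_pow _ _ (by omega)
    generalize (P.card + 1) ^ (18 + 2 * T) = M at this ⊢
    nlinarith

lemma exists_vc_const (k : ℕ) : ∃ c : ℕ, ∀ n : ℕ, 2 ^ n ≤ (n + 1) ^ k → n ≤ c := by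
  have h := tendsto_pow_const_div_const_pow_of_one_lt k (r := (2 : ℝ)) (by norm_num)
  have h' := (h.comp (Filter.tendsto_add_atTop_nat 1)).eventually (gt_mem_nhds (show (0 : ℝ) < 1 / 2 by norm_num))
  obtain ⟨c, hc⟩ := Filter.eventually_atTop.mp h'
  refine ⟨c, fun n hn => ?_⟩
  by_contra hlt
  push Not at hlt
  have := hc n hlt.le
  simp only [Function.comp] at this
  rw [div_lt_iff₀ (by positivity), pow_succ] at this
  have h2 : (2 : ℝ) ^ n ≤ ((n + 1 : ℕ) : ℝ) ^ k := by exact_mod_cast hn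
  linarith

theorem stmt17 :
    ∃ k c : ℕ, 0 < k ∧
      ∀ P Q R S : Set (Fin 3 → ℝ), P.Finite → Q.Finite → R.Finite → S.Finite →
        (∀ x ∈ P ∪ Q ∪ R ∪ S, ∀ y ∈ P ∪ Q ∪ R ∪ S, x ≠ y →
          ∀ i, x i - y i ∉ ({-1, 0, 1} : Set ℝ)) →
        ((fun s => N3cube P Q R s) '' S).ncard ≤ (P.ncard + 1) ^ k ∧
        ∀ A ⊆ P, Shatters ((fun s => N3cube P Q R s) '' S) A → A.ncard ≤ c := by
  obtain ⟨T, hT⟩ : ∃ T, Fintype.card CTy = T := ⟨_, rfl⟩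
  obtain ⟨c, hc⟩ := exists_vc_const (19 + 2 * T)
  refine ⟨19 + 2 * T, c, by omega, ?_⟩
  intro P Q R S hP _ _ hS _
  have count : ∀ A : Set (Fin 3 → ℝ), A.Finite → ((fun s => N3cube A Q R s) '' S).ncard ≤
      (A.ncard + 1) ^ (19 + 2 * T) := by
    intro A hA
    have := main_count T hT hA.toFinset hS.toFinset Q R
    rw [Set.Finite.coe_toFinset, Set.Finite.coe_toFinset, ← Set.ncard_eq_toFinset_card A hA] at this
    exact this
  refine ⟨count P hP, ?_⟩
  intro A hA hsh
  have hAf := hP.subset hA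
  apply hc
  refine le_trans ?_ (count A hAf)
  rw [← Set.ncard_powerset A hAf]
  apply Set.ncard_le_ncard _ (hS.image _)
  intro B hB
  obtain ⟨_, ⟨s, hs, rfl⟩, hsB⟩ := hsh B hB
  refine ⟨s, hs, ?_⟩
  rw [← hsB]
  ext w
  simp only [N3cube, Set.mem_ofPred_eq, Set.mem_inter_iff]
  constructor
  · rintro ⟨h1, h2⟩; exact ⟨⟨hA h1, h2⟩, h1⟩
  · rintro ⟨⟨_, h2⟩, h1⟩; exact ⟨h1, h2⟩
end
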